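/- Let Ω ⊂ ℝ^N be a bounded open set with smooth boundary, s ∈ (0,1), Q = ℝ^{2N} ∖ ((ℝ^N∖Ω) × (ℝ^N∖Ω)), let p : cl(Q) → ℝ be continuous and symmetric with 2 ≤ p⁻ ≤ p(x,y) ≤ p⁺ < ∞ and s p⁺ < N, and let q : cl(Ω) → ℝ be continuous with p⁺ < q⁻ ≤ q(x) ≤ q⁺ < p_s*(x)/2 + 1 for all x ∈ cl(Ω), where p̄(x) = p(x,x) and p_s*(x) = N p̄(x)/(N − s p̄(x)). Then the infimum d = inf_{u ∈ 𝒩} E(u) over the Nehari manifold is attained: there exists w ∈ W₀ with w ≠ 0, I(w) = 0, and E(w) = d. -/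

import Mathlib

/-!
The proof is the direct method on the Nehari manifold. Write `A` for the Gagliardo modular over `Q`
(`gagRho`) and `B` for the modular of `L^{q(·)}(Ω)` (`vModular`). On `W₀`, `I = A - B`, and on the
Nehari manifold the energy equals `J = E - I / p⁺`, an integral with nonnegative densities
(`reducedE`, `Setting.energyE_eq`) which controls `B` from above and decreases under multiplication
by `t ∈ (0, 1]`.

* Compact embedding. Subcriticality of `q` and uniform continuity of `p` near the diagonal give a
  constant `P ≤ p` near the diagonal with `q⁺ < N P / (N - s P)`. A bound on `A` yields a weak-type
  estimate for the distribution function (`Setting.weak_type`), hence a bound in `L^{q'}` for some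
  constant `q' > q⁺` (`Setting.lq_bound`); averaging over the cells of a fine grid shows that it also
  gives total boundedness in `L¹` and so a.e. convergent subsequences (`Setting.exists_subseq_ae`).
  Together these make `B` upper semicontinuous along such sequences (`Setting.limsup_vModular_le`).
* Geometry of the manifold. Since `p⁺ < q⁻`, `B` is bounded below by a positive constant on it
  (`Setting.nehari_lower`), it is nonempty (`Setting.exists_nehari`), and every `w ≠ 0` with
  `A w ≤ B w < ∞` has a multiple `t w`, `t ∈ (0, 1]`, on it (`Setting.exists_proj`).
* Conclusion (`Setting.exists_minimizer`). A minimizing sequence has bounded `A = B`; let `w` be the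
  a.e. limit of a subsequence. Fatou's lemma and upper semicontinuity of `B` give `A w ≤ B w`,
  `B w > 0` and `J w ≤ d`, so that `J (t w) ≤ J w ≤ d` for the projection `t w`.
-/

open MeasureTheory Filter Set
open scoped ENNReal

noncomputable section

/-- The modular of the variable exponent Lebesgue space `L^{h(·)}(Ω)`. -/
def vModular {N : ℕ} (Ω : Set (EuclideanSpace ℝ (Fin N))) (h : EuclideanSpace ℝ (Fin N) → ℝ)
    (u : EuclideanSpace ℝ (Fin N) → ℝ) : ℝ≥0∞ :=
  ∫⁻ x in Ω, ENNReal.ofReal (|u x| ^ h x)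

/-- The Luxemburg norm on `L^{h(·)}(Ω)`. -/
def vNorm {N : ℕ} (Ω : Set (EuclideanSpace ℝ (Fin N))) (h : EuclideanSpace ℝ (Fin N) → ℝ)
    (u : EuclideanSpace ℝ (Fin N) → ℝ) : ℝ :=
  sInf {l : ℝ | 0 < l ∧ vModular Ω h (fun x => u x / l) ≤ 1}

/-- Membership in the variable exponent Lebesgue space `L^{h(·)}(Ω)`. -/
def MemVLp {N : ℕ} (Ω : Set (EuclideanSpace ℝ (Fin N))) (h : EuclideanSpace ℝ (Fin N) → ℝ)
    (u : EuclideanSpace ℝ (Fin N) → ℝ) : Prop :=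
  AEMeasurable u (volume.restrict Ω) ∧ ∃ l : ℝ, 0 < l ∧ vModular Ω h (fun x => u x / l) < ⊤

/-- The variable exponent Gagliardo modular with scaling parameter `l`, over a set
`D ⊆ ℝ^N × ℝ^N`. -/
def gagModularOn {N : ℕ} (D : Set (EuclideanSpace ℝ (Fin N) × EuclideanSpace ℝ (Fin N)))
    (s : ℝ) (p : EuclideanSpace ℝ (Fin N) × EuclideanSpace ℝ (Fin N) → ℝ) (l : ℝ)
    (u : EuclideanSpace ℝ (Fin N) → ℝ) : ℝ≥0∞ :=
  ∫⁻ z in D, ENNReal.ofReal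
    (|u z.1 - u z.2| ^ p z / (l ^ p z * ‖z.1 - z.2‖ ^ ((N : ℝ) + s * p z)))

/-- The variable exponent Gagliardo (Luxemburg-type) seminorm over a set `D`. -/
def gagSemiOn {N : ℕ} (D : Set (EuclideanSpace ℝ (Fin N) × EuclideanSpace ℝ (Fin N)))
    (s : ℝ) (p : EuclideanSpace ℝ (Fin N) × EuclideanSpace ℝ (Fin N) → ℝ)
    (u : EuclideanSpace ℝ (Fin N) → ℝ) : ℝ :=
  sInf {l : ℝ | 0 < l ∧ gagModularOn D s p l u ≤ 1}

/-- The set `Q = ℝ^{2N} ∖ ((ℝ^N∖Ω) × (ℝ^N∖Ω))`. -/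
def Qset {N : ℕ} (Ω : Set (EuclideanSpace ℝ (Fin N))) :
    Set (EuclideanSpace ℝ (Fin N) × EuclideanSpace ℝ (Fin N)) :=
  (Ωᶜ ×ˢ Ωᶜ)ᶜ

/-- The Gagliardo modular `ρ_{s,p(·,·)}` over `Q` (extended-real valued). -/
def gagRho {N : ℕ} (Ω : Set (EuclideanSpace ℝ (Fin N))) (s : ℝ)
    (p : EuclideanSpace ℝ (Fin N) × EuclideanSpace ℝ (Fin N) → ℝ)
    (u : EuclideanSpace ℝ (Fin N) → ℝ) : ℝ≥0∞ :=
  ∫⁻ z in Qset Ω, ENNReal.ofReal (|u z.1 - u z.2| ^ p z / ‖z.1 - z.2‖ ^ ((N : ℝ) + s * p z))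

/-- The Gagliardo seminorm `[u]_{s,p(·,·)}` over `Q`. -/
def gagSemi {N : ℕ} (Ω : Set (EuclideanSpace ℝ (Fin N))) (s : ℝ)
    (p : EuclideanSpace ℝ (Fin N) × EuclideanSpace ℝ (Fin N) → ℝ)
    (u : EuclideanSpace ℝ (Fin N) → ℝ) : ℝ :=
  gagSemiOn (Qset Ω) s p u

/-- Membership in the space `W₀`: measurable, vanishing a.e. outside `Ω`, finite
Gagliardo modular for some scaling. -/
def MemW0 {N : ℕ} (Ω : Set (EuclideanSpace ℝ (Fin N))) (s : ℝ)
    (p : EuclideanSpace ℝ (Fin N) × EuclideanSpace ℝ (Fin N) → ℝ)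
    (u : EuclideanSpace ℝ (Fin N) → ℝ) : Prop :=
  Measurable u ∧ (∀ᵐ x ∂(volume.restrict Ωᶜ), u x = 0) ∧
    ∃ l : ℝ, 0 < l ∧ gagModularOn (Qset Ω) s p l u < ⊤

/-- The Gagliardo modular `ρ_{s,p(·,·)}` over `Q` (real valued). -/
def rhoR {N : ℕ} (Ω : Set (EuclideanSpace ℝ (Fin N))) (s : ℝ)
    (p : EuclideanSpace ℝ (Fin N) × EuclideanSpace ℝ (Fin N) → ℝ)
    (u : EuclideanSpace ℝ (Fin N) → ℝ) : ℝ :=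
  ∫ z in Qset Ω, |u z.1 - u z.2| ^ p z / ‖z.1 - z.2‖ ^ ((N : ℝ) + s * p z)

/-- The energy functional `E`. -/
def energyE {N : ℕ} (Ω : Set (EuclideanSpace ℝ (Fin N))) (s : ℝ)
    (p : EuclideanSpace ℝ (Fin N) × EuclideanSpace ℝ (Fin N) → ℝ)
    (q : EuclideanSpace ℝ (Fin N) → ℝ) (u : EuclideanSpace ℝ (Fin N) → ℝ) : ℝ :=
  (∫ z in Qset Ω, |u z.1 - u z.2| ^ p z / (p z * ‖z.1 - z.2‖ ^ ((N : ℝ) + s * p z))) -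
    ∫ x in Ω, |u x| ^ q x / q x

/-- The Nehari functional `I`. -/
def nehariI {N : ℕ} (Ω : Set (EuclideanSpace ℝ (Fin N))) (s : ℝ)
    (p : EuclideanSpace ℝ (Fin N) × EuclideanSpace ℝ (Fin N) → ℝ)
    (q : EuclideanSpace ℝ (Fin N) → ℝ) (u : EuclideanSpace ℝ (Fin N) → ℝ) : ℝ :=
  rhoR Ω s p u - ∫ x in Ω, |u x| ^ q x

/-! ### Setting and a Poincaré inequality -/

/-- Euclidean space `ℝ^N`. -/
abbrev Eu (N : ℕ) := EuclideanSpace ℝ (Fin N)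

/-- The consequences of the hypotheses on `Ω, s, p, q` that the variational argument uses. The last
field is the subcriticality of `q` in uniform form: near the diagonal `p` is bounded below by a
constant `P` whose critical exponent `N P / (N - s P)` still exceeds `qp = q⁺`. -/
structure Setting {N : ℕ} (Ω : Set (Eu N)) (s : ℝ) (p : Eu N × Eu N → ℝ) (q : Eu N → ℝ)
    (pp qm qp : ℝ) : Prop where
  hN : 0 < N
  isOpen : IsOpen Ω
  bdd : Bornology.IsBounded Ω
  nonempty : Ω.Nonempty
  s_pos : 0 < s
  s_lt : s < 1
  pmeas : AEMeasurable p (volume.restrict (Qset Ω))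
  two_le : ∀ z ∈ Qset Ω, 2 ≤ p z
  p_le : ∀ z ∈ Qset Ω, p z ≤ pp
  qmeas : AEMeasurable q (volume.restrict Ω)
  le_q : ∀ x ∈ Ω, qm ≤ q x
  q_le : ∀ x ∈ Ω, q x ≤ qp
  pq : pp < qm
  near : ∃ δ > 0, ∃ P > 0, s * P < N ∧ qp < N * P / (N - s * P) ∧
    ∀ x ∈ Ω, ∀ y, dist x y < δ → P ≤ p (x, y)

/-- Measurable functions vanishing a.e. outside `Ω`. -/
structure Adm {N : ℕ} (Ω : Set (Eu N)) (u : Eu N → ℝ) : Prop where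
  meas : Measurable u
  zero : ∀ᵐ x ∂(volume.restrict Ωᶜ), u x = 0

/-- The density of the Gagliardo modular. -/
def dens {N : ℕ} (s : ℝ) (p : Eu N × Eu N → ℝ) (u : Eu N → ℝ) (z : Eu N × Eu N) : ℝ :=
  |u z.1 - u z.2| ^ p z / ‖z.1 - z.2‖ ^ ((N : ℝ) + s * p z)

variable {N : ℕ} {Ω : Set (Eu N)} {s : ℝ} {p : Eu N × Eu N → ℝ} {q : Eu N → ℝ} {pp qm qp : ℝ}

lemma dens_nonneg (u : Eu N → ℝ) (z : Eu N × Eu N) : 0 ≤ dens s p u z := by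
  unfold dens; positivity

lemma gagRho_eq (u : Eu N → ℝ) :
    gagRho Ω s p u = ∫⁻ z in Qset Ω, ENNReal.ofReal (dens s p u z) := rfl

lemma Setting.isOpen_Q (h : Setting Ω s p q pp qm qp) : IsOpen (Qset Ω) :=
  ((h.isOpen.isClosed_compl).prod h.isOpen.isClosed_compl).isOpen_compl

lemma Setting.meas_Q (h : Setting Ω s p q pp qm qp) : MeasurableSet (Qset Ω) :=
  h.isOpen_Q.measurableSet

lemma mem_Q_left {x y : Eu N} (hx : x ∈ Ω) : (x, y) ∈ Qset Ω := by
  simp [Qset, hx]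

lemma mem_Q_right {x y : Eu N} (hy : y ∈ Ω) : (x, y) ∈ Qset Ω := by
  simp [Qset, hy]

lemma Setting.vol_lt_top (h : Setting Ω s p q pp qm qp) : volume Ω < ⊤ :=
  h.bdd.measure_lt_top

lemma Setting.aem_dens (h : Setting Ω s p q pp qm qp) {u : Eu N → ℝ} (hu : Measurable u) :
    AEMeasurable (dens s p u) (volume.restrict (Qset Ω)) := by
  have h1 : AEMeasurable (fun z : Eu N × Eu N => |u z.1 - u z.2|) (volume.restrict (Qset Ω)) := by
    have : Measurable (fun z : Eu N × Eu N => u z.1 - u z.2) := by fun_prop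
    exact (continuous_abs.measurable.comp this).aemeasurable
  have h2 : AEMeasurable (fun z : Eu N × Eu N => ‖z.1 - z.2‖) (volume.restrict (Qset Ω)) := by
    fun_prop
  exact (h1.pow h.pmeas).div (h2.pow ((h.pmeas.const_mul s).const_add _))

lemma Adm.ae_zero (hΩ : MeasurableSet Ω) {u : Eu N → ℝ} (hu : Adm Ω u) :
    ∀ᵐ x, x ∉ Ω → u x = 0 :=
  (ae_restrict_iff' hΩ.compl).1 hu.zero

/-- The elementary bound that trades a difference quotient for the modular density: with
`a = t / r ^ s` it is `a ≤ 1 + a ^ p`. -/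
lemma diff_le {t r s P M : ℝ} (ht : 0 ≤ t) (hr : 0 < r) (hP : 1 ≤ P) :
    t ≤ r ^ s + r ^ (s + M) * (t ^ P / r ^ (M + s * P)) := by
  have hrs : 0 < r ^ s := Real.rpow_pos_of_pos hr s
  set a := t / r ^ s with ha
  have ha0 : 0 ≤ a := by positivity
  have hta : t = r ^ s * a := by rw [ha]; field_simp
  have h1 : a ≤ 1 + a ^ P := by
    rcases le_total a 1 with h | h
    · have := Real.rpow_nonneg ha0 P; linarith
    · have := Real.rpow_le_rpow_of_exponent_le h hP
      rw [Real.rpow_one] at this; linarith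
  have h2 : r ^ (s + M) * (t ^ P / r ^ (M + s * P)) = r ^ s * a ^ P := by
    rw [ha, Real.div_rpow ht hrs.le, ← Real.rpow_mul hr.le, Real.rpow_add hr, Real.rpow_add hr]
    have := Real.rpow_pos_of_pos hr M
    field_simp
  rw [h2]
  calc t = r ^ s * a := hta
    _ ≤ r ^ s * (1 + a ^ P) := by gcongr
    _ = _ := by ring

/-- `diff_le` for points of `Q` at distance at most `D`. -/
lemma Setting.abs_sub_le (h : Setting Ω s p q pp qm qp) (u : Eu N → ℝ) {z : Eu N × Eu N}
    (hz : z ∈ Qset Ω) {D : ℝ} (hD : ‖z.1 - z.2‖ ≤ D) :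
    |u z.1 - u z.2| ≤ D ^ s + D ^ (s + N) * dens s p u z := by
  have hd := dens_nonneg (s := s) (p := p) u z
  have hD0 : 0 ≤ D := (norm_nonneg _).trans hD
  by_cases h0 : z.1 = z.2
  · rw [h0, sub_self, abs_zero]
    positivity
  have hr : 0 < ‖z.1 - z.2‖ := norm_pos_iff.2 (sub_ne_zero.2 h0)
  have hs := h.s_pos
  calc |u z.1 - u z.2| ≤ ‖z.1 - z.2‖ ^ s + ‖z.1 - z.2‖ ^ (s + N) * dens s p u z :=
        diff_le (abs_nonneg _) hr (by linarith [h.two_le z hz])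
    _ ≤ _ := by gcongr

/-- A Poincaré inequality: the `L¹` norm is controlled by the modular. It comes from comparing
`u` on `Ω` with its zero values on a ball disjoint from `Ω`. -/
lemma Setting.l1_bound (h : Setting Ω s p q pp qm qp) (M : ℝ≥0∞) (hM : M < ⊤) :
    ∃ C : ℝ≥0∞, C < ⊤ ∧ ∀ u : Eu N → ℝ, Adm Ω u → gagRho Ω s p u ≤ M →
      ∫⁻ x, ENNReal.ofReal |u x| ≤ C := by
  have : Nonempty (Fin N) := ⟨⟨0, h.hN⟩⟩
  obtain ⟨R, hR⟩ := h.bdd.subset_ball 0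
  obtain ⟨c, hc⟩ := NormedSpace.exists_lt_norm ℝ (Eu N) (R + 1)
  set B := Metric.ball c 1 with hB
  have hdisj : ∀ y ∈ B, y ∉ Ω := by
    intro y hy hyΩ
    have h1 := hR hyΩ
    rw [mem_ball_zero_iff] at h1
    rw [hB, Metric.mem_ball, dist_eq_norm] at hy
    have : ‖c‖ ≤ ‖y‖ + ‖y - c‖ := by
      have := norm_sub_le y (y - c); simpa using this
    linarith
  set D := R + ‖c‖ + 1 with hD
  have hB0 : volume B ≠ 0 := (Metric.measure_ball_pos volume c one_pos).ne'
  have hB1 : volume B ≠ ⊤ := measure_ball_lt_top.ne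
  have hsubQ : Ω ×ˢ B ⊆ Qset Ω := fun z hz => mem_Q_left (x := z.1) (y := z.2) hz.1
  have hmΩ := h.isOpen.measurableSet
  have hmB : MeasurableSet B := measurableSet_ball
  refine ⟨(ENNReal.ofReal (D ^ s) * (volume Ω * volume B) + ENNReal.ofReal (D ^ (s + N)) * M)
    / volume B, ?_, fun u hu hA => ?_⟩
  · refine ENNReal.div_lt_top (ENNReal.add_lt_top.2 ⟨?_, ?_⟩).ne hB0
    · exact ENNReal.mul_lt_top ENNReal.ofReal_lt_top
        (ENNReal.mul_lt_top h.vol_lt_top hB1.lt_top)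
    · exact ENNReal.mul_lt_top ENNReal.ofReal_lt_top hM
  rw [ENNReal.le_div_iff_mul_le (Or.inl hB0) (Or.inl hB1)]
  have hz := hu.ae_zero hmΩ
  have hmu : Measurable (fun x => ENNReal.ofReal |u x|) := by
    have := hu.meas; fun_prop
  have e1 : ∫⁻ x, ENNReal.ofReal |u x| = ∫⁻ x in Ω, ENNReal.ofReal |u x| := by
    rw [← lintegral_indicator hmΩ]
    refine lintegral_congr_ae ?_
    filter_upwards [hz] with x hx
    by_cases hxΩ : x ∈ Ω
    · simp [hxΩ]
    · simp [hxΩ, hx hxΩ]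
  have e2 : (∫⁻ x in Ω, ENNReal.ofReal |u x|) * volume B
      = ∫⁻ z in Ω ×ˢ B, ENNReal.ofReal |u z.1| := by
    have hmu1 : AEMeasurable (fun z : Eu N × Eu N => ENNReal.ofReal |u z.1|)
        ((volume.restrict Ω).prod (volume.restrict B)) := (hmu.comp measurable_fst).aemeasurable
    rw [Measure.volume_eq_prod, ← Measure.prod_restrict, lintegral_prod _ hmu1]
    simp only [lintegral_const, Measure.restrict_apply MeasurableSet.univ, univ_inter]
    rw [lintegral_mul_const _ hmu]
  rw [e1, e2]
  have hz2 : ∀ᵐ z : Eu N × Eu N, z.2 ∉ Ω → u z.2 = 0 :=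
    Measure.quasiMeasurePreserving_snd.ae hz
  have hD0 : 0 ≤ D ^ s ∧ 0 ≤ D ^ (s + (N:ℝ)) := by
    obtain ⟨x, hx⟩ := h.nonempty
    have := (norm_nonneg x).trans_lt (mem_ball_zero_iff.1 (hR hx))
    have : 0 ≤ D := by positivity
    constructor <;> positivity
  calc ∫⁻ z in Ω ×ˢ B, ENNReal.ofReal |u z.1|
      ≤ ∫⁻ z in Ω ×ˢ B, (ENNReal.ofReal (D ^ s)
          + ENNReal.ofReal (D ^ (s + N)) * ENNReal.ofReal (dens s p u z)) := by
        refine lintegral_mono_ae ?_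
        rw [ae_restrict_iff' (hmΩ.prod hmB)]
        filter_upwards [hz2] with z hz2 hzm
        rw [← ENNReal.ofReal_mul hD0.2, ← ENNReal.ofReal_add hD0.1
          (mul_nonneg hD0.2 (dens_nonneg _ _))]
        refine ENNReal.ofReal_le_ofReal ?_
        have hd : ‖z.1 - z.2‖ ≤ D := by
          have h1 := mem_ball_zero_iff.1 (hR hzm.1)
          have h2 := hzm.2
          rw [hB, Metric.mem_ball, dist_eq_norm] at h2
          have h3 := norm_sub_le z.1 z.2
          have h4 : ‖z.2‖ ≤ ‖c‖ + ‖z.2 - c‖ := by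
            have := norm_add_le c (z.2 - c); simpa using this
          linarith
        have := h.abs_sub_le u (hsubQ hzm) hd
        rwa [hz2 (hdisj _ hzm.2), sub_zero] at this
    _ = ENNReal.ofReal (D ^ s) * (volume Ω * volume B)
          + ENNReal.ofReal (D ^ (s + N)) * ∫⁻ z in Ω ×ˢ B, ENNReal.ofReal (dens s p u z) := by
        rw [lintegral_add_left measurable_const, lintegral_const_mul' _ _ ENNReal.ofReal_ne_top,
          lintegral_const, Measure.restrict_apply MeasurableSet.univ, univ_inter,
          Measure.volume_eq_prod, Measure.prod_prod]
    _ ≤ _ := by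
        gcongr
        exact (lintegral_mono_set hsubQ).trans hA

/-! ### Weak-type Sobolev estimate -/

/-- Volume of the unit ball. -/
def unitVol (N : ℕ) : ℝ := (volume (Metric.ball (0 : Eu N) 1)).toReal

lemma unitVol_pos : 0 < unitVol N :=
  ENNReal.toReal_pos (Metric.measure_ball_pos volume _ one_pos).ne' measure_ball_lt_top.ne

lemma volume_ball_eq (hN : 0 < N) (x : Eu N) {r : ℝ} (hr : 0 ≤ r) :
    volume (Metric.ball x r) = ENNReal.ofReal (r ^ (N : ℝ) * unitVol N) := by
  have : Nonempty (Fin N) := ⟨⟨0, hN⟩⟩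
  rw [Measure.addHaar_ball _ _ hr, finrank_euclideanSpace_fin, ENNReal.ofReal_mul (by positivity),
    unitVol, ENNReal.ofReal_toReal measure_ball_lt_top.ne, Real.rpow_natCast]

/-- If `{|u| > T}` fills at most half of a ball of radius `ρ`, then every point of `{|u| > 2T}` sees
many points at distance less than `ρ` where `u` differs by at least `T`; this bounds the measure of
`{|u| > 2T}` by the modular. -/
lemma Setting.weak_step (h : Setting Ω s p q pp qm qp) {δ P : ℝ} (hP0 : 0 < P)
    (hP : ∀ x ∈ Ω, ∀ y, dist x y < δ → P ≤ p (x, y)) {ρ T : ℝ} (hρ : 0 < ρ) (hρδ : ρ ≤ δ)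
    (hρ1 : ρ ≤ 1) (hT : 1 ≤ T) {u : Eu N → ℝ} (hu : Adm Ω u)
    (hα : volume {x | x ∈ Ω ∧ T < |u x|} ≤ ENNReal.ofReal (ρ ^ (N : ℝ) * unitVol N / 2)) :
    ENNReal.ofReal (T ^ P / ρ ^ (N + s * P)) * (ENNReal.ofReal (ρ ^ (N : ℝ) * unitVol N / 2) *
      volume {x | x ∈ Ω ∧ 2 * T < |u x|}) ≤ gagRho Ω s p u := by
  have hmΩ := h.isOpen.measurableSet
  have hmu := hu.meas
  have hmE : ∀ t : ℝ, MeasurableSet {x | x ∈ Ω ∧ t < |u x|} := fun t =>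
    hmΩ.inter (measurableSet_lt measurable_const (continuous_abs.measurable.comp hmu))
  set E := {x | x ∈ Ω ∧ T < |u x|} with hE
  set F := {x | x ∈ Ω ∧ 2 * T < |u x|} with hF
  set S : Set (Eu N × Eu N) := {z | z.1 ∈ F ∧ dist z.2 z.1 < ρ ∧ z.2 ∉ E} with hS
  have hmS : MeasurableSet S := by
    refine (measurable_fst (hmE _)).inter (MeasurableSet.inter ?_ (measurable_snd (hmE T).compl))
    exact measurableSet_lt (f := fun z : Eu N × Eu N => dist z.2 z.1) (by fun_prop)
      measurable_const
  have hSQ : S ⊆ Qset Ω := fun z hz => mem_Q_left (x := z.1) (y := z.2) hz.1.1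
  have hω := unitVol_pos (N := N)
  have hslice : ∀ x ∈ F, ENNReal.ofReal (ρ ^ (N : ℝ) * unitVol N / 2)
      ≤ volume (Prod.mk x ⁻¹' S) := by
    intro x hx
    have e : Prod.mk x ⁻¹' S = Metric.ball x ρ \ E := by
      ext y; simp [hS, hx]
    rw [e]
    refine le_trans ?_ (le_measure_sdiff (μ := volume) (s₁ := Metric.ball x ρ) (s₂ := E))
    rw [volume_ball_eq h.hN x hρ.le]
    refine le_trans ?_ (tsub_le_tsub_left hα _)
    rw [← ENNReal.ofReal_sub _ (by positivity)]
    exact ENNReal.ofReal_le_ofReal (by linarith)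
  have hvol : ENNReal.ofReal (ρ ^ (N : ℝ) * unitVol N / 2) * volume F ≤ volume S := by
    rw [Measure.volume_eq_prod, Measure.prod_apply hmS]
    calc _ = ∫⁻ x in F, ENNReal.ofReal (ρ ^ (N : ℝ) * unitVol N / 2) := by
          rw [lintegral_const, Measure.restrict_apply MeasurableSet.univ, univ_inter]
      _ ≤ ∫⁻ x in F, volume (Prod.mk x ⁻¹' S) :=
          setLIntegral_mono' (hmE _) hslice
      _ ≤ _ := setLIntegral_le_lintegral _ _
  have hz2 : ∀ᵐ z : Eu N × Eu N, z.2 ∉ Ω → u z.2 = 0 :=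
    Measure.quasiMeasurePreserving_snd.ae (hu.ae_zero hmΩ)
  calc _ ≤ ENNReal.ofReal (T ^ P / ρ ^ (N + s * P)) * volume S := by gcongr
    _ = ∫⁻ z in S, ENNReal.ofReal (T ^ P / ρ ^ (N + s * P)) := by
        rw [lintegral_const, Measure.restrict_apply MeasurableSet.univ, univ_inter]
    _ ≤ ∫⁻ z in S, ENNReal.ofReal (dens s p u z) := by
        refine lintegral_mono_ae ?_
        rw [ae_restrict_iff' hmS]
        filter_upwards [hz2] with z hz hzS
        refine ENNReal.ofReal_le_ofReal ?_
        obtain ⟨hzF, hzd, hzE⟩ := hzS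
        have hy : |u z.2| ≤ T := by
          by_cases hy : z.2 ∈ Ω
          · by_contra hcon
            exact hzE ⟨hy, not_le.1 hcon⟩
          · rw [hz hy, abs_zero]; linarith
        have hx : 2 * T < |u z.1| := hzF.2
        have hdiff : T ≤ |u z.1 - u z.2| := by
          have := abs_sub_abs_le_abs_sub (u z.1) (u z.2); linarith
        have hne : z.1 ≠ z.2 := by
          intro he; rw [he] at hx; linarith
        have hr : 0 < ‖z.1 - z.2‖ := norm_pos_iff.2 (sub_ne_zero.2 hne)
        have hrρ : ‖z.1 - z.2‖ ≤ ρ := by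
          rw [dist_comm, dist_eq_norm] at hzd; exact hzd.le
        have hPp : P ≤ p z := hP z.1 hzF.1 z.2 (by rw [dist_comm]; linarith)
        have hs := h.s_pos
        unfold dens
        have h1 : T ^ P ≤ |u z.1 - u z.2| ^ p z :=
          (Real.rpow_le_rpow_of_exponent_le hT hPp).trans
            (Real.rpow_le_rpow (by linarith) hdiff (by linarith))
        have h2 : ‖z.1 - z.2‖ ^ ((N:ℝ) + s * p z) ≤ ρ ^ (N + s * P) :=
          (Real.rpow_le_rpow_of_exponent_ge hr (hrρ.trans hρ1)
            (by gcongr)).trans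
            (Real.rpow_le_rpow hr.le hrρ (by positivity))
        have h3 : 0 < ‖z.1 - z.2‖ ^ ((N:ℝ) + s * p z) := Real.rpow_pos_of_pos hr _
        gcongr
    _ ≤ _ := lintegral_mono_set hSQ

/-- Weak-type Sobolev inequality at the exponent `r = N P / (N - s P)`, obtained by iterating
`weak_step` over dyadic levels; the starting level is supplied by the `L¹` bound. -/
lemma Setting.weak_type (h : Setting Ω s p q pp qm qp) {δ P : ℝ} (hδ : 0 < δ) (hP0 : 0 < P)
    (hsP : s * P < N) (hP : ∀ x ∈ Ω, ∀ y, dist x y < δ → P ≤ p (x, y))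
    (M : ℝ≥0∞) (hM : M < ⊤) :
    ∃ k₀ : ℕ, ∃ η : ℝ, 0 < η ∧ ∀ u : Eu N → ℝ, Adm Ω u → gagRho Ω s p u ≤ M → ∀ j : ℕ,
      volume {x | x ∈ Ω ∧ (2:ℝ) ^ (k₀ + j) < |u x|} ≤
        ENNReal.ofReal (η * ((2:ℝ) ^ (-(N * P / (N - s * P)))) ^ j) := by
  obtain ⟨C, hC, hCb⟩ := h.l1_bound M hM
  have hω := unitVol_pos (N := N)
  have hNpos : (0:ℝ) < N := by exact_mod_cast h.hN
  have hs := h.s_pos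
  set ω := unitVol N with hωdef
  set r := N * P / (N - s * P) with hr
  have hNsP : 0 < N - s * P := by linarith
  have hr0 : 0 < r := by positivity
  have hrP : P + r * (s * P) / N = r := by
    have hr' : r * (N - s * P) = N * P := div_mul_cancel₀ _ hNsP.ne'
    field_simp
    linarith
  set ρ₀ := min δ 1 with hρ₀
  have hρ₀0 : 0 < ρ₀ := lt_min hδ one_pos
  set η := ρ₀ ^ (N:ℝ) * ω / 2 with hη
  have hη0 : 0 < η := by positivity
  -- the level `2 ^ k₀` from which the dyadic induction starts and closes
  have hk : ∃ k₀ : ℕ, C.toReal ≤ η * (2:ℝ) ^ k₀ ∧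
      M.toReal * (2 / ω) * ρ₀ ^ (s * P) * 2 ^ r * (2 / ω) / ρ₀ ^ (N:ℝ) ≤ ((2:ℝ) ^ k₀) ^ P := by
    have t1 : Tendsto (fun k : ℕ => (2:ℝ) ^ k) atTop atTop :=
      tendsto_pow_atTop_atTop_of_one_lt one_lt_two
    have t2 : Tendsto (fun k : ℕ => ((2:ℝ) ^ k) ^ P) atTop atTop :=
      (tendsto_rpow_atTop hP0).comp t1
    have t3 : Tendsto (fun k : ℕ => η * (2:ℝ) ^ k) atTop atTop := t1.const_mul_atTop hη0
    exact ((t3.eventually_ge_atTop _).and (t2.eventually_ge_atTop _)).exists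
  obtain ⟨k₀, hk1, hk2⟩ := hk
  refine ⟨k₀, η, hη0, fun u hu hA j => ?_⟩
  set b : ℝ := 2 ^ (-r) with hb
  have hb0 : 0 < b := by positivity
  have hb1 : b ≤ 1 := Real.rpow_le_one_of_one_le_of_nonpos one_le_two (by linarith)
  induction j with
  | zero =>
    rw [pow_zero, mul_one, add_zero]
    have hmarkov := mul_meas_ge_le_lintegral (μ := volume)
      (f := fun x => ENNReal.ofReal |u x|) (by have := hu.meas; fun_prop)
      (ENNReal.ofReal ((2:ℝ) ^ k₀))
    have h1 : ENNReal.ofReal ((2:ℝ) ^ k₀) * volume {x | x ∈ Ω ∧ (2:ℝ) ^ k₀ < |u x|} ≤ C := by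
      refine le_trans ?_ (hmarkov.trans (hCb u hu hA))
      refine mul_le_mul_right (measure_mono fun x hx => ?_) _
      exact ENNReal.ofReal_le_ofReal hx.2.le
    have h2 : C ≤ ENNReal.ofReal ((2:ℝ) ^ k₀) * ENNReal.ofReal η := by
      rw [← ENNReal.ofReal_mul (by positivity), mul_comm, ← ENNReal.ofReal_toReal hC.ne]
      exact ENNReal.ofReal_le_ofReal hk1
    exact (ENNReal.mul_le_mul_iff_right (ENNReal.ofReal_pos.2 (by positivity)).ne'
      ENNReal.ofReal_ne_top).1 (h1.trans h2)
  | succ j ih =>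
    set T : ℝ := 2 ^ (k₀ + j) with hT
    have hT1 : 1 ≤ T := one_le_pow₀ one_le_two
    -- radius for which half the ball has the volume bounding `{|u| > T}`
    set ρ := ρ₀ * (b ^ j) ^ ((1:ℝ) / N) with hρ
    have hbj0 : 0 < b ^ j := by positivity
    have hρ0 : 0 < ρ := by positivity
    have hρle : ρ ≤ ρ₀ := by
      refine mul_le_of_le_one_right hρ₀0.le (Real.rpow_le_one hbj0.le (pow_le_one₀ hb0.le hb1) ?_)
      positivity
    have hρN : ρ ^ (N:ℝ) * ω / 2 = η * b ^ j := by
      rw [hρ, Real.mul_rpow hρ₀0.le (by positivity), ← Real.rpow_mul hbj0.le,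
        one_div_mul_cancel hNpos.ne', Real.rpow_one, hη]
      ring
    have hst := h.weak_step hP0 hP hρ0 (hρle.trans (min_le_left _ _))
      (hρle.trans (min_le_right _ _)) hT1 hu (by rw [← hωdef, hρN]; exact ih)
    rw [← hωdef, hρN] at hst
    have e2T : 2 * T = 2 ^ (k₀ + (j + 1)) := by rw [hT]; ring
    rw [e2T] at hst
    have hX : 0 < T ^ P / ρ ^ (N + s * P) * (η * b ^ j) := by positivity
    rw [← mul_assoc, ← ENNReal.ofReal_mul (by positivity)] at hst
    refine (ENNReal.mul_le_mul_iff_right (ENNReal.ofReal_pos.2 hX).ne'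
      ENNReal.ofReal_ne_top).1 ((hst.trans hA).trans ?_)
    rw [← ENNReal.ofReal_mul hX.le, ← ENNReal.ofReal_toReal hM.ne]
    refine ENNReal.ofReal_le_ofReal ?_
    -- everything is expressed through `k₀`-dependent constants and powers of `b ^ j`
    have hTP : T ^ P = ((2:ℝ) ^ k₀) ^ P * ((2:ℝ) ^ j) ^ P := by
      rw [hT, pow_add, Real.mul_rpow (by positivity) (by positivity)]
    have hρs : ρ ^ (s * P) = ρ₀ ^ (s * P) * (b ^ j) ^ (s * P / N) := by
      rw [hρ, Real.mul_rpow hρ₀0.le (by positivity), ← Real.rpow_mul hbj0.le]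
      congr 2; ring
    have hbj : b ^ j * ((2:ℝ) ^ j) ^ P = (b ^ j) ^ (s * P / N) := by
      rw [hb, ← Real.rpow_natCast, ← Real.rpow_natCast, ← Real.rpow_mul (by norm_num),
        ← Real.rpow_mul (by norm_num), ← Real.rpow_mul (by norm_num),
        ← Real.rpow_add (by norm_num)]
      congr 1
      have : -r * j * (s * P / N) = - (r * (s * P) / N) * j := by ring
      rw [this]; linear_combination (-(j:ℝ)) * hrP.symm
    have hρN' : ρ ^ (N:ℝ) = η * b ^ j * (2 / ω) := by rw [← hρN]; field_simp
    have h2r : (2:ℝ) ^ r * b = 1 := by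
      rw [hb, ← Real.rpow_add (by norm_num)]; simp
    have key : T ^ P / ρ ^ (N + s * P) * (η * b ^ j) * (η * b ^ (j + 1))
        = ((2:ℝ) ^ k₀) ^ P * (ω / 2) * η * b / ρ₀ ^ (s * P) := by
      rw [Real.rpow_add hρ0, hρN', hρs, hTP, ← hbj]
      field_simp
      ring
    rw [key]
    have hη' : ρ₀ ^ (N:ℝ) = η * (2 / ω) := by rw [hη]; field_simp
    rw [hη', div_le_iff₀ (by positivity)] at hk2
    rw [le_div_iff₀ (by positivity)]
    have hb' : b = 1 / 2 ^ r := by rw [eq_div_iff (by positivity), mul_comm]; exact h2r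
    rw [hb', mul_one_div, le_div_iff₀ (by positivity)]
    have := mul_le_mul_of_nonneg_left hk2 (show 0 ≤ (ω / 2) ^ 2 by positivity)
    calc M.toReal * ρ₀ ^ (s * P) * 2 ^ r
        = (ω / 2) ^ 2 * (M.toReal * (2 / ω) * ρ₀ ^ (s * P) * 2 ^ r * (2 / ω)) := by field_simp
      _ ≤ _ := this
      _ = _ := by field_simp

/-! ### Bounds for the modulars -/

lemma Setting.two_le_pp (h : Setting Ω s p q pp qm qp) : 2 ≤ pp := by
  obtain ⟨x, hx⟩ := h.nonempty
  exact (h.two_le _ (mem_Q_left (y := x) hx)).trans (h.p_le _ (mem_Q_left hx))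

lemma Setting.qm_le_qp (h : Setting Ω s p q pp qm qp) : qm ≤ qp := by
  obtain ⟨x, hx⟩ := h.nonempty
  exact (h.le_q x hx).trans (h.q_le x hx)

/-- Subcritical Sobolev inequality: a bound on the modular controls an `L^{q'}` norm with
`q' > q⁺`. -/
lemma Setting.lq_bound (h : Setting Ω s p q pp qm qp) :
    ∃ q' : ℝ, qp < q' ∧ ∀ M : ℝ≥0∞, M < ⊤ → ∃ C : ℝ≥0∞, C < ⊤ ∧ ∀ u : Eu N → ℝ, Adm Ω u →
      gagRho Ω s p u ≤ M → ∫⁻ x in Ω, ENNReal.ofReal (|u x| ^ q') ≤ C := by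
  obtain ⟨δ, hδ, P, hP0, hsP, hqP, hP⟩ := h.near
  set r := N * P / (N - s * P) with hr
  have hqp : 0 < qp := by linarith [h.two_le_pp, h.pq, h.qm_le_qp]
  refine ⟨(qp + r) / 2, by linarith, fun M hM => ?_⟩
  set q' := (qp + r) / 2 with hq'
  have hq'0 : 0 < q' := by linarith
  obtain ⟨k₀, η, hη, hw⟩ := h.weak_type hδ hP0 hsP hP M hM
  set b : ℝ := 2 ^ (-r) with hb
  have hb0 : 0 < b := by positivity
  set a : ℝ := 2 ^ q' * b with ha
  have ha0 : 0 ≤ a := by positivity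
  have ha1 : a < 1 := by
    rw [ha, hb, ← Real.rpow_add (by norm_num)]
    exact Real.rpow_lt_one_of_one_lt_of_neg one_lt_two (by linarith)
  set L : ℕ → ℝ := fun j => ((2:ℝ) ^ (k₀ + (j + 1))) ^ q' with hL
  set K : ℝ := ((2:ℝ) ^ (k₀ + 1)) ^ q' * η with hK
  have hK0 : 0 ≤ K := by positivity
  have hsum : Summable (fun j => K * a ^ j) := (summable_geometric_of_lt_one ha0 ha1).mul_left K
  refine ⟨ENNReal.ofReal (((2:ℝ) ^ k₀) ^ q') * volume Ω + ENNReal.ofReal (∑' j, K * a ^ j),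
    ?_, fun u hu hA => ?_⟩
  · exact ENNReal.add_lt_top.2 ⟨ENNReal.mul_lt_top ENNReal.ofReal_lt_top h.vol_lt_top,
      ENNReal.ofReal_lt_top⟩
  have hmΩ := h.isOpen.measurableSet
  have hmE : ∀ t : ℝ, MeasurableSet {x | x ∈ Ω ∧ t < |u x|} := fun t =>
    hmΩ.inter (measurableSet_lt measurable_const (continuous_abs.measurable.comp hu.meas))
  have hpt : ∀ x ∈ Ω, ENNReal.ofReal (|u x| ^ q') ≤ ENNReal.ofReal (((2:ℝ) ^ k₀) ^ q') +
      ∑' j, ({x | x ∈ Ω ∧ (2:ℝ) ^ (k₀ + j) < |u x|}).indicator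
        (fun _ => ENNReal.ofReal (L j)) x := by
    intro x hx
    by_cases hle : |u x| ≤ 2 ^ k₀
    · exact le_add_right (ENNReal.ofReal_le_ofReal
        (Real.rpow_le_rpow (abs_nonneg _) hle hq'0.le))
    · push Not at hle
      -- the last dyadic level below `|u x|`
      have hex : ∃ j : ℕ, |u x| ≤ 2 ^ (k₀ + (j + 1)) := by
        obtain ⟨n, hn⟩ := pow_unbounded_of_one_lt |u x| (one_lt_two (α := ℝ))
        exact ⟨n, hn.le.trans (pow_le_pow_right₀ one_le_two (by lia))⟩
      classical
      set j := Nat.find hex with hj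
      have hj1 : |u x| ≤ 2 ^ (k₀ + (j + 1)) := Nat.find_spec hex
      have hj2 : (2:ℝ) ^ (k₀ + j) < |u x| := by
        rcases Nat.eq_zero_or_pos j with h0 | h0
        · rw [h0]; exact hle
        · have := Nat.find_min hex (m := j - 1) (by lia)
          rw [not_le] at this
          have e : j - 1 + 1 = j := by lia
          rwa [e] at this
      refine le_add_left (le_trans ?_ (ENNReal.le_tsum j))
      rw [indicator_of_mem (show x ∈ {x | x ∈ Ω ∧ (2:ℝ) ^ (k₀ + j) < |u x|} from ⟨hx, hj2⟩)]
      exact ENNReal.ofReal_le_ofReal (Real.rpow_le_rpow (abs_nonneg _) hj1 hq'0.le)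
  calc ∫⁻ x in Ω, ENNReal.ofReal (|u x| ^ q')
      ≤ ∫⁻ x in Ω, (ENNReal.ofReal (((2:ℝ) ^ k₀) ^ q') +
      ∑' j, ({x | x ∈ Ω ∧ (2:ℝ) ^ (k₀ + j) < |u x|}).indicator
        (fun _ => ENNReal.ofReal (L j)) x) := setLIntegral_mono' hmΩ hpt
    _ = ENNReal.ofReal (((2:ℝ) ^ k₀) ^ q') * volume Ω + ∑' j, ∫⁻ x in Ω,
          ({x | x ∈ Ω ∧ (2:ℝ) ^ (k₀ + j) < |u x|}).indicator
            (fun _ => ENNReal.ofReal (L j)) x := by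
        rw [lintegral_add_left measurable_const, lintegral_const,
          Measure.restrict_apply MeasurableSet.univ, univ_inter, lintegral_tsum]
        exact fun j => (measurable_const.indicator (hmE _)).aemeasurable
    _ ≤ _ := by
        gcongr
        rw [ENNReal.ofReal_tsum_of_nonneg (fun j => by positivity) hsum]
        refine ENNReal.tsum_le_tsum fun j => ?_
        refine (setLIntegral_le_lintegral _ _).trans ?_
        rw [lintegral_indicator_const (hmE _)]
        calc ENNReal.ofReal (L j) * volume {x | x ∈ Ω ∧ (2:ℝ) ^ (k₀ + j) < |u x|}
            ≤ ENNReal.ofReal (L j) * ENNReal.ofReal (η * b ^ j) := by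
              gcongr; exact hw u hu hA j
          _ = _ := by
              rw [← ENNReal.ofReal_mul (by positivity)]
              congr 1
              have : (2:ℝ) ^ (k₀ + (j + 1)) = 2 ^ (k₀ + 1) * 2 ^ j := by ring
              have e2 : ((2:ℝ) ^ j) ^ q' = (2 ^ q') ^ j := by
                rw [← Real.rpow_natCast, ← Real.rpow_natCast, ← Real.rpow_mul (by norm_num),
                  ← Real.rpow_mul (by norm_num), mul_comm]
              rw [hL, hK, ha]
              simp only
              rw [this, Real.mul_rpow (by positivity) (by positivity), e2]
              ring

/-- The part of the `q`-modular above the level `K` is controlled by a higher norm. -/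
lemma Setting.vModular_le_trunc (h : Setting Ω s p q pp qm qp) {q' K : ℝ} (hq' : qp < q')
    (hK : 1 ≤ K) {u : Eu N → ℝ} (hu : Adm Ω u) :
    vModular Ω q u ≤ (∫⁻ x in Ω, ENNReal.ofReal (min |u x| K ^ q x)) +
      ENNReal.ofReal (K ^ (-(q' - qp))) * ∫⁻ x in Ω, ENNReal.ofReal (|u x| ^ q') := by
  have hm1 : Measurable (fun x => ENNReal.ofReal (|u x| ^ q')) := by
    have := hu.meas; fun_prop
  rw [← lintegral_const_mul _ hm1, ← lintegral_add_right _ (hm1.const_mul _)]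
  refine setLIntegral_mono' h.isOpen.measurableSet fun x hx => ?_
  rcases le_or_gt |u x| K with hle | hgt
  · rw [min_eq_left hle]; exact le_self_add
  · refine le_add_left ?_
    have hK0 : 0 < K := by linarith
    rw [← ENNReal.ofReal_mul (by positivity)]
    refine ENNReal.ofReal_le_ofReal ?_
    have hu0 : 0 < |u x| := hK0.trans hgt
    calc |u x| ^ q x ≤ |u x| ^ qp :=
          Real.rpow_le_rpow_of_exponent_le (by linarith) (h.q_le x hx)
      _ = |u x| ^ (-(q' - qp)) * |u x| ^ q' := by
          rw [← Real.rpow_add hu0]; congr 1; ring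
      _ ≤ _ := by
          gcongr ?_ * _
          exact Real.rpow_le_rpow_of_nonpos hK0 hgt.le (by linarith)

lemma Setting.q_pos (h : Setting Ω s p q pp qm qp) {x : Eu N} (hx : x ∈ Ω) : 0 < q x := by
  linarith [h.two_le_pp, h.pq, h.le_q x hx]

lemma Setting.vModular_bound (h : Setting Ω s p q pp qm qp) (M : ℝ≥0∞) (hM : M < ⊤) :
    ∃ C : ℝ≥0∞, C < ⊤ ∧ ∀ u : Eu N → ℝ, Adm Ω u → gagRho Ω s p u ≤ M →
      vModular Ω q u ≤ C := by
  obtain ⟨q', hq', hb⟩ := h.lq_bound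
  obtain ⟨C, hC, hb⟩ := hb M hM
  refine ⟨volume Ω + C, ENNReal.add_lt_top.2 ⟨h.vol_lt_top, hC⟩, fun u hu hA => ?_⟩
  refine (h.vModular_le_trunc hq' le_rfl hu).trans ?_
  rw [Real.one_rpow, ENNReal.ofReal_one, one_mul]
  gcongr
  · calc ∫⁻ x in Ω, ENNReal.ofReal (min |u x| 1 ^ q x) ≤ ∫⁻ x in Ω, 1 := by
          refine setLIntegral_mono' h.isOpen.measurableSet fun x hx => ?_
          rw [← ENNReal.ofReal_one]
          exact ENNReal.ofReal_le_ofReal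
            (Real.rpow_le_one (by positivity) (min_le_right _ _) (h.q_pos hx).le)
      _ = _ := by simp
  · exact hb u hu hA

lemma dens_smul {t : ℝ} (ht : 0 ≤ t) (u : Eu N → ℝ) (z : Eu N × Eu N) :
    dens s p (fun x => t * u x) z = t ^ p z * dens s p u z := by
  unfold dens
  rw [← mul_sub, abs_mul, abs_of_nonneg ht, Real.mul_rpow ht (abs_nonneg _)]
  ring

lemma abs_smul_rpow {t : ℝ} (ht : 0 ≤ t) (a b : ℝ) : |t * a| ^ b = t ^ b * |a| ^ b := by
  rw [abs_mul, abs_of_nonneg ht, Real.mul_rpow ht (abs_nonneg _)]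

lemma Adm.smul {u : Eu N → ℝ} (hu : Adm Ω u) (t : ℝ) : Adm Ω (fun x => t * u x) :=
  ⟨hu.meas.const_mul t, by filter_upwards [hu.zero] with x hx; rw [hx, mul_zero]⟩

lemma Setting.gagRho_smul_le (h : Setting Ω s p q pp qm qp) {t : ℝ} (ht : 1 ≤ t)
    (u : Eu N → ℝ) :
    gagRho Ω s p (fun x => t * u x) ≤ ENNReal.ofReal (t ^ pp) * gagRho Ω s p u := by
  rw [gagRho_eq, gagRho_eq, ← lintegral_const_mul' _ _ ENNReal.ofReal_ne_top]
  refine setLIntegral_mono' h.meas_Q fun z hz => ?_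
  rw [dens_smul (by linarith), ← ENNReal.ofReal_mul (by positivity)]
  refine ENNReal.ofReal_le_ofReal (mul_le_mul_of_nonneg_right ?_ (dens_nonneg _ _))
  exact Real.rpow_le_rpow_of_exponent_le ht (h.p_le z hz)

lemma Setting.le_gagRho_smul (h : Setting Ω s p q pp qm qp) {t : ℝ} (ht0 : 0 < t) (ht : t ≤ 1)
    (u : Eu N → ℝ) :
    ENNReal.ofReal (t ^ pp) * gagRho Ω s p u ≤ gagRho Ω s p (fun x => t * u x) := by
  rw [gagRho_eq, gagRho_eq, ← lintegral_const_mul' _ _ ENNReal.ofReal_ne_top]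
  refine setLIntegral_mono' h.meas_Q fun z hz => ?_
  rw [dens_smul ht0.le, ← ENNReal.ofReal_mul (by positivity)]
  refine ENNReal.ofReal_le_ofReal (mul_le_mul_of_nonneg_right ?_ (dens_nonneg _ _))
  exact Real.rpow_le_rpow_of_exponent_ge ht0 ht (h.p_le z hz)

lemma Setting.vModular_smul_le (h : Setting Ω s p q pp qm qp) {t : ℝ} (ht0 : 0 < t) (ht : t ≤ 1)
    (u : Eu N → ℝ) :
    vModular Ω q (fun x => t * u x) ≤ ENNReal.ofReal (t ^ qm) * vModular Ω q u := by
  unfold vModular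
  rw [← lintegral_const_mul' _ _ ENNReal.ofReal_ne_top]
  refine setLIntegral_mono' h.isOpen.measurableSet fun x hx => ?_
  rw [abs_smul_rpow ht0.le, ← ENNReal.ofReal_mul (by positivity)]
  refine ENNReal.ofReal_le_ofReal (mul_le_mul_of_nonneg_right ?_ (by positivity))
  exact Real.rpow_le_rpow_of_exponent_ge ht0 ht (h.le_q x hx)

lemma Setting.le_vModular_smul (h : Setting Ω s p q pp qm qp) {t : ℝ} (ht : 1 ≤ t)
    (u : Eu N → ℝ) :
    ENNReal.ofReal (t ^ qm) * vModular Ω q u ≤ vModular Ω q (fun x => t * u x) := by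
  unfold vModular
  rw [← lintegral_const_mul' _ _ ENNReal.ofReal_ne_top]
  refine setLIntegral_mono' h.isOpen.measurableSet fun x hx => ?_
  rw [abs_smul_rpow (by linarith), ← ENNReal.ofReal_mul (by positivity)]
  refine ENNReal.ofReal_le_ofReal (mul_le_mul_of_nonneg_right ?_ (by positivity))
  exact Real.rpow_le_rpow_of_exponent_le ht (h.le_q x hx)

lemma Setting.aem_q (h : Setting Ω s p q pp qm qp) {u : Eu N → ℝ} (hu : Measurable u) :
    AEMeasurable (fun x => |u x| ^ q x) (volume.restrict Ω) :=
  (continuous_abs.measurable.comp hu).aemeasurable.pow h.qmeas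

lemma Setting.vModular_eq_zero (h : Setting Ω s p q pp qm qp) {u : Eu N → ℝ} (hu : Adm Ω u) :
    vModular Ω q u = 0 ↔ u =ᵐ[volume] (0 : Eu N → ℝ) := by
  have hmΩ := h.isOpen.measurableSet
  unfold vModular
  rw [lintegral_eq_zero_iff' (h.aem_q hu.meas).ennreal_ofReal, EventuallyEq,
    ae_restrict_iff' hmΩ]
  constructor
  · intro hx
    filter_upwards [hx, hu.ae_zero hmΩ] with x h1 h2
    by_cases hxΩ : x ∈ Ω
    · have h3 := h1 hxΩ
      simp only [Pi.zero_apply, ENNReal.ofReal_eq_zero] at h3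
      by_contra hne
      have : 0 < |u x| := abs_pos.2 hne
      exact absurd h3 (not_le.2 (by positivity))
    · exact h2 hxΩ
  · intro hx
    filter_upwards [hx] with x h1 hxΩ
    simp [h1, Real.zero_rpow (h.q_pos hxΩ).ne']

lemma Setting.gagRho_ne_zero (h : Setting Ω s p q pp qm qp) {u : Eu N → ℝ} (hu : Adm Ω u)
    (hB : vModular Ω q u ≠ 0) : gagRho Ω s p u ≠ 0 := by
  intro hA
  obtain ⟨C, hC, hb⟩ := h.vModular_bound 1 ENNReal.one_lt_top
  apply hB
  -- all multiples `t u` have zero modular, so `t ^ qm * B(u)` stays bounded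
  have hle : ∀ t : ℝ, 1 ≤ t → ENNReal.ofReal (t ^ qm) * vModular Ω q u ≤ C := by
    intro t ht
    refine (h.le_vModular_smul ht u).trans (hb _ (hu.smul t) ?_)
    refine (h.gagRho_smul_le ht u).trans ?_
    simp [hA]
  by_contra hne
  have hqm : 0 < qm := by linarith [h.two_le_pp, h.pq]
  have t1 : Tendsto (fun t : ℝ => ENNReal.ofReal (t ^ qm) * vModular Ω q u) atTop (nhds ⊤) := by
    have := ENNReal.Tendsto.mul_const (b := vModular Ω q u)
      (ENNReal.tendsto_ofReal_atTop.comp (tendsto_rpow_atTop hqm)) (Or.inl ENNReal.top_ne_zero)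
    rwa [ENNReal.top_mul hne] at this
  exact absurd (le_of_tendsto t1 ((eventually_ge_atTop 1).mono hle)) (not_le.2 hC)

/-- The Nehari manifold stays away from the origin. -/
lemma Setting.nehari_lower (h : Setting Ω s p q pp qm qp) :
    ∃ c : ℝ, 0 < c ∧ ∀ u : Eu N → ℝ, Adm Ω u → gagRho Ω s p u = vModular Ω q u →
      vModular Ω q u ≠ 0 → vModular Ω q u ≠ ⊤ → ENNReal.ofReal c ≤ vModular Ω q u := by
  obtain ⟨C, hC, hb⟩ := h.vModular_bound 1 ENNReal.one_lt_top
  have hpp : 0 < pp := by linarith [h.two_le_pp]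
  have hpq := h.pq
  set e := qm / pp - 1 with he
  have he0 : 0 < e := by rw [he, sub_pos, one_lt_div hpp]; exact hpq
  set C' := max C.toReal 1 with hC'
  have hC'1 : 1 ≤ C' := le_max_right _ _
  have hC'0 : 0 < C' := by linarith
  refine ⟨C' ^ (-(1 / e)), by positivity, fun u hu hAB hB0 hBt => ?_⟩
  set α := (vModular Ω q u).toReal with hα
  have hα0 : 0 < α := ENNReal.toReal_pos hB0 hBt
  have hBα : vModular Ω q u = ENNReal.ofReal α := (ENNReal.ofReal_toReal hBt).symm
  rw [hBα]
  refine ENNReal.ofReal_le_ofReal ?_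
  rcases le_or_gt 1 α with h1 | h1
  · exact (Real.rpow_le_one_of_one_le_of_nonpos hC'1 (by simp [he0.le])).trans h1
  -- normalise: `v = t u` with `t ^ pp = 1 / α` has modular at most one
  set t := α ^ (-(1 / pp)) with ht
  have ht1 : 1 ≤ t := Real.one_le_rpow_of_pos_of_le_one_of_nonpos hα0 h1.le (by simp [hpp.le])
  have htpp : t ^ pp = α⁻¹ := by
    rw [ht, ← Real.rpow_mul hα0.le, neg_mul, one_div_mul_cancel hpp.ne', Real.rpow_neg_one]
  have hA1 : gagRho Ω s p (fun x => t * u x) ≤ 1 := by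
    refine (h.gagRho_smul_le ht1 u).trans ?_
    rw [hAB, hBα, ← ENNReal.ofReal_mul (by positivity), htpp, inv_mul_cancel₀ hα0.ne',
      ENNReal.ofReal_one]
  have hB1 := (h.le_vModular_smul ht1 u).trans (hb _ (hu.smul t) hA1)
  rw [hBα, ← ENNReal.ofReal_mul (by positivity)] at hB1
  have hB2 : t ^ qm * α ≤ C' :=
    ((ENNReal.ofReal_le_iff_le_toReal hC.ne).1 hB1).trans (le_max_left _ _)
  have hte : t ^ qm * α = α ^ (-e) := by
    rw [ht, ← Real.rpow_mul hα0.le]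
    nth_rw 2 [← Real.rpow_one α]
    rw [← Real.rpow_add hα0]; congr 1; rw [he]; ring
  rw [hte] at hB2
  calc C' ^ (-(1 / e)) ≤ (α ^ (-e)) ^ (-(1 / e)) :=
        Real.rpow_le_rpow_of_nonpos (by positivity) hB2 (by simp [he0.le])
    _ = α := by
        rw [← Real.rpow_mul hα0.le, neg_mul_neg, mul_one_div_cancel he0.ne', Real.rpow_one]

/-! ### Approximation by step functions on a grid -/

/-- The cell with index `k` of the cubic grid of mesh `a`. -/
def cube (a : ℝ) (k : Fin N → ℤ) : Set (Eu N) := {x | ∀ i, ⌊x i / a⌋ = k i}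

lemma cube_eq {a : ℝ} (ha : 0 < a) (k : Fin N → ℤ) :
    cube a k = (WithLp.ofLp : Eu N → (Fin N → ℝ)) ⁻¹'
      (univ.pi fun i => Ico (k i * a) ((k i + 1) * a)) := by
  ext x
  simp only [cube, Set.mem_ofPred_eq, mem_preimage, Set.mem_pi, mem_univ, true_implies, mem_Ico,
    Int.floor_eq_iff, le_div_iff₀ ha, div_lt_iff₀ ha]

lemma measurableSet_cube {a : ℝ} (ha : 0 < a) (k : Fin N → ℤ) : MeasurableSet (cube a k) := by
  rw [cube_eq ha]
  exact (PiLp.volume_preserving_ofLp (Fin N)).measurable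
    (MeasurableSet.univ_pi fun i => measurableSet_Ico)

lemma volume_cube {a : ℝ} (ha : 0 < a) (k : Fin N → ℤ) :
    volume (cube a k) = ENNReal.ofReal (a ^ (N : ℝ)) := by
  rw [cube_eq ha, (PiLp.volume_preserving_ofLp (Fin N)).measure_preimage
    (MeasurableSet.univ_pi fun i => measurableSet_Ico).nullMeasurableSet, Real.volume_pi_Ico]
  have : ∀ i : Fin N, ((k i : ℝ) + 1) * a - k i * a = a := fun i => by ring
  simp only [this, Finset.prod_const, Finset.card_univ, Fintype.card_fin]
  rw [Real.rpow_natCast, ENNReal.ofReal_pow ha.le]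

lemma norm_sub_le_of_mem_cube {a : ℝ} (ha : 0 < a) {k : Fin N → ℤ} {x y : Eu N}
    (hx : x ∈ cube a k) (hy : y ∈ cube a k) : ‖x - y‖ ≤ √N * a := by
  rw [cube_eq ha] at hx hy
  rw [EuclideanSpace.norm_eq]
  have : ∀ i, ‖(x - y) i‖ ^ 2 ≤ a ^ 2 := by
    intro i
    have h1 := hx i (mem_univ i)
    have h2 := hy i (mem_univ i)
    simp only [mem_Ico] at h1 h2
    rw [PiLp.sub_apply, Real.norm_eq_abs, sq_abs]
    exact sq_le_sq' (by linarith) (by linarith)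
  calc √(∑ i, ‖(x - y) i‖ ^ 2) ≤ √(∑ i : Fin N, a ^ 2) :=
        Real.sqrt_le_sqrt (Finset.sum_le_sum fun i _ => this i)
    _ = √N * a := by
        rw [Finset.sum_const, Finset.card_univ, Fintype.card_fin, nsmul_eq_mul,
          Real.sqrt_mul (by positivity), Real.sqrt_sq ha.le]

/-- The mean oscillation of `u` on a cell is controlled by the part of the modular carried by it. -/
lemma Setting.cube_osc (h : Setting Ω s p q pp qm qp) {a : ℝ} (ha : 0 < a) (k : Fin N → ℤ)
    {u : Eu N → ℝ} (hu : Adm Ω u) (hint : Integrable u) :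
    ∫⁻ x in cube a k, ‖u x - (a ^ (N:ℝ))⁻¹ * ∫ y in cube a k, u y‖ₑ ≤
      ENNReal.ofReal ((√N * a) ^ s) * volume (cube a k) +
      ENNReal.ofReal ((a ^ (N:ℝ))⁻¹ * (√N * a) ^ (s + N)) *
        ∫⁻ z in (cube a k ×ˢ cube a k) ∩ Qset Ω, ENNReal.ofReal (dens s p u z) := by
  set B := cube a k with hB
  have hmB : MeasurableSet B := measurableSet_cube ha k
  set V := a ^ (N:ℝ) with hV
  have hV0 : 0 < V := by positivity
  have hvol : volume B = ENNReal.ofReal V := volume_cube ha k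
  have hvt : volume B ≠ ⊤ := by rw [hvol]; exact ENNReal.ofReal_ne_top
  have hmu := hu.meas
  have hmd : Measurable (fun z : Eu N × Eu N => u z.1 - u z.2) := by fun_prop
  have hreal : volume.real B = V := by
    rw [Measure.real, hvol, ENNReal.toReal_ofReal hV0.le]
  have h1 : ∀ x, ‖u x - V⁻¹ * ∫ y in B, u y‖ₑ
      ≤ ENNReal.ofReal V⁻¹ * ∫⁻ y in B, ‖u x - u y‖ₑ := by
    intro x
    have e : u x - V⁻¹ * ∫ y in B, u y = V⁻¹ * ∫ y in B, (u x - u y) := by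
      have hcst : IntegrableOn (fun _ : Eu N => u x) B := integrableOn_const hvt
      rw [integral_sub hcst hint.integrableOn, setIntegral_const, hreal,
        smul_eq_mul]
      field_simp
    rw [e, enorm_mul, Real.enorm_eq_ofReal (by positivity)]
    gcongr
    exact enorm_integral_le_lintegral_enorm _
  have hz1 : ∀ᵐ z : Eu N × Eu N, z.1 ∉ Ω → u z.1 = 0 :=
    Measure.quasiMeasurePreserving_fst.ae (hu.ae_zero h.isOpen.measurableSet)
  have hz2 : ∀ᵐ z : Eu N × Eu N, z.2 ∉ Ω → u z.2 = 0 :=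
    Measure.quasiMeasurePreserving_snd.ae (hu.ae_zero h.isOpen.measurableSet)
  have hD : 0 ≤ √N * a := by positivity
  have h2 : ∫⁻ z in B ×ˢ B, ‖u z.1 - u z.2‖ₑ ≤
      ENNReal.ofReal ((√N * a) ^ s) * (volume B * volume B) +
      ENNReal.ofReal ((√N * a) ^ (s + N)) *
        ∫⁻ z in (B ×ˢ B) ∩ Qset Ω, ENNReal.ofReal (dens s p u z) := by
    have hmQ := h.meas_Q
    calc ∫⁻ z in B ×ˢ B, ‖u z.1 - u z.2‖ₑ
        ≤ ∫⁻ z in B ×ˢ B, (ENNReal.ofReal ((√N * a) ^ s) + (Qset Ω).indicator (fun z =>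
            ENNReal.ofReal ((√N * a) ^ (s + N)) * ENNReal.ofReal (dens s p u z)) z) := by
          refine lintegral_mono_ae ?_
          rw [ae_restrict_iff' (hmB.prod hmB)]
          filter_upwards [hz1, hz2] with z hz1 hz2 hzB
          by_cases hzQ : z ∈ Qset Ω
          · rw [indicator_of_mem hzQ, ← ENNReal.ofReal_mul (by positivity),
              ← ENNReal.ofReal_add (by positivity)
                (mul_nonneg (by positivity) (dens_nonneg _ _)), Real.enorm_eq_ofReal_abs]
            exact ENNReal.ofReal_le_ofReal
              (h.abs_sub_le u hzQ (norm_sub_le_of_mem_cube ha hzB.1 hzB.2))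
          · have : z.1 ∉ Ω ∧ z.2 ∉ Ω :=
              ⟨fun hh => hzQ (mem_Q_left (y := z.2) hh), fun hh => hzQ (mem_Q_right (x := z.1) hh)⟩
            rw [hz1 this.1, hz2 this.2]; simp
      _ = _ := by
          rw [lintegral_add_left measurable_const, lintegral_const,
            Measure.restrict_apply MeasurableSet.univ, univ_inter, lintegral_indicator hmQ,
            Measure.restrict_restrict hmQ, lintegral_const_mul' _ _ ENNReal.ofReal_ne_top,
            inter_comm, Measure.volume_eq_prod, Measure.prod_prod]
  calc ∫⁻ x in B, ‖u x - V⁻¹ * ∫ y in B, u y‖ₑ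
      ≤ ∫⁻ x in B, ENNReal.ofReal V⁻¹ * ∫⁻ y in B, ‖u x - u y‖ₑ := lintegral_mono h1
    _ = ENNReal.ofReal V⁻¹ * ∫⁻ z in B ×ˢ B, ‖u z.1 - u z.2‖ₑ := by
        rw [lintegral_const_mul' _ _ ENNReal.ofReal_ne_top, Measure.volume_eq_prod,
          ← Measure.prod_restrict, lintegral_prod _ hmd.enorm.aemeasurable]
    _ ≤ _ := by
        refine (mul_le_mul_right h2 _).trans ?_
        rw [mul_add, ← mul_assoc, ← mul_assoc, ← mul_assoc, ENNReal.ofReal_mul (by positivity)]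
        gcongr
        have hone : ENNReal.ofReal V⁻¹ * ENNReal.ofReal V = 1 := by
          rw [← ENNReal.ofReal_mul (by positivity), inv_mul_cancel₀ hV0.ne', ENNReal.ofReal_one]
        rw [hvol]
        calc _ = (ENNReal.ofReal V⁻¹ * ENNReal.ofReal V) * ENNReal.ofReal ((√N * a) ^ s) := by ring
          _ ≤ _ := by rw [hone, one_mul]

/-- Quantitative approximation in `L¹` by step functions on a finite grid with bounded values. -/
lemma Setting.cube_approx (h : Setting Ω s p q pp qm qp) (M : ℝ≥0∞) (hM : M < ⊤) :
    ∃ K : ℝ≥0∞, K < ⊤ ∧ ∀ a : ℝ, 0 < a → a ≤ 1 → ∃ I : Finset (Fin N → ℤ), ∃ R : ℝ,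
      ∀ u : Eu N → ℝ, Adm Ω u → gagRho Ω s p u ≤ M → Integrable u ∧
        ∃ c : (Fin N → ℤ) → ℝ, (∀ k, |c k| ≤ R) ∧
        ∫⁻ x, ‖u x - ∑ k ∈ I, (cube a k).indicator (fun _ => c k) x‖ₑ
          ≤ ENNReal.ofReal (a ^ s) * K := by
  obtain ⟨C, hC, hCb⟩ := h.l1_bound M hM
  obtain ⟨R₀, hR₀⟩ := h.bdd.subset_ball 0
  set W := volume (Metric.ball (0 : Eu N) (R₀ + √N)) with hW
  have hWt : W < ⊤ := measure_ball_lt_top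
  refine ⟨ENNReal.ofReal ((√N) ^ s) * W + ENNReal.ofReal ((√N) ^ (s + N)) * M,
    ENNReal.add_lt_top.2 ⟨ENNReal.mul_lt_top ENNReal.ofReal_lt_top hWt,
      ENNReal.mul_lt_top ENNReal.ofReal_lt_top hM⟩, fun a ha ha1 => ?_⟩
  have hfin : ((fun (x : Eu N) (i : Fin N) => ⌊x i / a⌋) '' Ω).Finite := by
    refine (finite_Icc (fun _ : Fin N => ⌊-R₀ / a⌋) (fun _ => ⌊R₀ / a⌋)).subset ?_
    rintro _ ⟨x, hx, rfl⟩
    have hn := (mem_ball_zero_iff.1 (hR₀ hx)).le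
    have hi : ∀ i, |x i| ≤ R₀ := fun i => (PiLp.norm_apply_le x i).trans hn
    refine ⟨fun i => ?_, fun i => ?_⟩
    · exact Int.floor_le_floor (div_le_div_of_nonneg_right (neg_le_of_abs_le (hi i)) ha.le)
    · exact Int.floor_le_floor (div_le_div_of_nonneg_right (le_of_abs_le (hi i)) ha.le)
  set V := a ^ (N:ℝ) with hV
  have hV0 : 0 < V := by positivity
  set I := hfin.toFinset with hI
  have hmΩ := h.isOpen.measurableSet
  have hdisj : ∀ k l : Fin N → ℤ, k ≠ l → Disjoint (cube a k) (cube a l) := by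
    intro k l hkl
    rw [Set.disjoint_left]
    intro x hx hx'
    exact hkl (funext fun i => (hx i).symm.trans (hx' i))
  refine ⟨I, V⁻¹ * C.toReal, fun u hu hA => ?_⟩
  have hL1 := hCb u hu hA
  have hint : Integrable u := by
    refine ⟨hu.meas.aestronglyMeasurable, ?_⟩
    simp only [HasFiniteIntegral, Real.enorm_eq_ofReal_abs]
    exact hL1.trans_lt hC
  refine ⟨hint, fun k => V⁻¹ * ∫ y in cube a k, u y, fun k => ?_, ?_⟩
  · rw [abs_mul, abs_of_pos (by positivity)]
    gcongr
    rw [← Real.norm_eq_abs, ← toReal_enorm]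
    refine ENNReal.toReal_mono hC.ne ((enorm_integral_le_lintegral_enorm _).trans
      ((setLIntegral_le_lintegral _ _).trans ?_))
    simpa only [Real.enorm_eq_ofReal_abs] using hL1
  set c : (Fin N → ℤ) → ℝ := fun k => V⁻¹ * ∫ y in cube a k, u y with hc
  -- almost everywhere, at most one cell contributes, and none off the cells meeting `Ω`
  have hpt : ∀ᵐ x, ‖u x - ∑ k ∈ I, (cube a k).indicator (fun _ => c k) x‖ₑ
      ≤ ∑ k ∈ I, (cube a k).indicator (fun x => ‖u x - c k‖ₑ) x := by
    filter_upwards [hu.ae_zero hmΩ] with x hx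
    set k₀ : Fin N → ℤ := fun i => ⌊x i / a⌋ with hk₀
    have hmem : x ∈ cube a k₀ := fun i => rfl
    have hnot : ∀ k, k ≠ k₀ → x ∉ cube a k := fun k hk hxk =>
      Set.disjoint_left.1 (hdisj k k₀ hk) hxk hmem
    by_cases hkI : k₀ ∈ I
    · rw [Finset.sum_eq_single_of_mem k₀ hkI
        (fun k _ hk => indicator_of_notMem (hnot k hk) _),
        Finset.sum_eq_single_of_mem k₀ hkI
        (fun k _ hk => indicator_of_notMem (hnot k hk) _),
        indicator_of_mem hmem, indicator_of_mem hmem]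
    · have hxΩ : x ∉ Ω := fun hxΩ => hkI (hfin.mem_toFinset.2 ⟨x, hxΩ, rfl⟩)
      have hne : ∀ k ∈ I, k ≠ k₀ := fun k hk e => hkI (e ▸ hk)
      rw [Finset.sum_eq_zero (fun k hk => indicator_of_notMem (hnot k (hne k hk)) _), hx hxΩ]
      simp
  have hmu := hu.meas
  have hmQ := h.meas_Q
  have hmc := fun k : Fin N → ℤ => measurableSet_cube ha k
  have hs := h.s_pos
  calc ∫⁻ x, ‖u x - ∑ k ∈ I, (cube a k).indicator (fun _ => c k) x‖ₑ
      ≤ ∫⁻ x, ∑ k ∈ I, (cube a k).indicator (fun x => ‖u x - c k‖ₑ) x := lintegral_mono_ae hpt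
    _ = ∑ k ∈ I, ∫⁻ x in cube a k, ‖u x - c k‖ₑ := by
        rw [lintegral_finsetSum]
        · exact Finset.sum_congr rfl fun k _ => lintegral_indicator (hmc k) _
        · intro k _
          exact Measurable.indicator (by fun_prop) (hmc k)
    _ ≤ ∑ k ∈ I, (ENNReal.ofReal ((√N * a) ^ s) * volume (cube a k) +
          ENNReal.ofReal (V⁻¹ * (√N * a) ^ (s + N)) *
          ∫⁻ z in (cube a k ×ˢ cube a k) ∩ Qset Ω, ENNReal.ofReal (dens s p u z)) :=
        Finset.sum_le_sum fun k _ => h.cube_osc ha k hu hint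
    _ = ENNReal.ofReal ((√N * a) ^ s) * volume (⋃ k ∈ I, cube a k) +
          ENNReal.ofReal (V⁻¹ * (√N * a) ^ (s + N)) *
          ∫⁻ z in ⋃ k ∈ I, (cube a k ×ˢ cube a k) ∩ Qset Ω, ENNReal.ofReal (dens s p u z) := by
        rw [Finset.sum_add_distrib, ← Finset.mul_sum, ← Finset.mul_sum,
          measure_biUnion_finset (fun k _ l _ hkl => hdisj k l hkl) (fun k _ => hmc k),
          lintegral_biUnion_finset _ (fun k _ => ((hmc k).prod (hmc k)).inter hmQ)]
        intro k _ l _ hkl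
        refine Disjoint.mono inter_subset_left inter_subset_left ?_
        exact Set.disjoint_prod.2 (Or.inl (hdisj k l hkl))
    _ ≤ ENNReal.ofReal ((√N * a) ^ s) * W +
          ENNReal.ofReal (V⁻¹ * (√N * a) ^ (s + N)) * M := by
        gcongr
        · refine measure_mono (iUnion₂_subset fun k hk y hy => ?_)
          obtain ⟨x, hx, hxk⟩ := hfin.mem_toFinset.1 hk
          have hxc : x ∈ cube a k := fun i => congrFun hxk i
          have h1 := mem_ball_zero_iff.1 (hR₀ hx)
          have h2 := norm_sub_le_of_mem_cube ha hy hxc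
          rw [mem_ball_zero_iff]
          have h3 : ‖y‖ ≤ ‖x‖ + ‖y - x‖ := by
            have := norm_add_le x (y - x); simpa using this
          have h4 : √N * a ≤ √N := mul_le_of_le_one_right (by positivity) ha1
          linarith
        · refine (lintegral_mono_set ?_).trans hA
          exact iUnion₂_subset fun k _ => inter_subset_right
    _ = _ := by
        have e1 : (√N * a) ^ s = a ^ s * (√N) ^ s := by
          rw [Real.mul_rpow (by positivity) ha.le, mul_comm]
        have e2 : V⁻¹ * (√N * a) ^ (s + N) = a ^ s * (√N) ^ (s + N) := by
          rw [Real.mul_rpow (by positivity) ha.le, Real.rpow_add ha, ← hV]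
          field_simp
        rw [e1, e2, ENNReal.ofReal_mul (by positivity), ENNReal.ofReal_mul (by positivity)]
        ring

/-! ### Compactness -/

/-- Sets of bounded modular are relatively compact for a.e. convergence along subsequences. -/
lemma Setting.exists_subseq_ae (h : Setting Ω s p q pp qm qp) (M : ℝ≥0∞) (hM : M < ⊤)
    (u : ℕ → Eu N → ℝ) (hu : ∀ n, Adm Ω (u n)) (hA : ∀ n, gagRho Ω s p (u n) ≤ M) :
    ∃ w : Eu N → ℝ, Adm Ω w ∧ ∃ φ : ℕ → ℕ, StrictMono φ ∧
      ∀ᵐ x, Tendsto (fun n => u (φ n) x) atTop (nhds (w x)) := by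
  obtain ⟨K, hK, happ⟩ := h.cube_approx M hM
  have hint : ∀ n, Integrable (u n) := by
    obtain ⟨I, R, hIR⟩ := happ 1 one_pos le_rfl
    exact fun n => (hIR (u n) (hu n) (hA n)).1
  set f : ℕ → Lp ℝ 1 (volume : Measure (Eu N)) :=
    fun n => (memLp_one_iff_integrable.2 (hint n)).toLp (u n) with hf
  have hfu : ∀ n, (f n : Eu N → ℝ) =ᵐ[volume] u n := fun n => MemLp.coeFn_toLp _
  have htb : TotallyBounded (range f) := by
    rw [EMetric.totallyBounded_iff]
    intro ε hε
    have hε2 : 0 < ε / 2 := ENNReal.half_pos hε.ne'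
    obtain ⟨a, ha0, ha1, haε⟩ : ∃ a : ℝ, 0 < a ∧ a ≤ 1 ∧ ENNReal.ofReal (a ^ s) * K < ε / 2 := by
      have ht : Tendsto (fun a : ℝ => ENNReal.ofReal (a ^ s) * K) (nhdsWithin 0 (Ioi 0))
          (nhds 0) := by
        have h1 : Tendsto (fun a : ℝ => a ^ s) (nhdsWithin 0 (Ioi 0)) (nhds 0) := by
          have := (Real.continuousAt_rpow_const 0 s (Or.inr h.s_pos.le)).tendsto
          rw [Real.zero_rpow h.s_pos.ne'] at this
          exact this.mono_left nhdsWithin_le_nhds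
        have h2 := ENNReal.Tendsto.mul_const (ENNReal.tendsto_ofReal h1) (Or.inr hK.ne)
        simpa using h2
      have h3 := ht.eventually (gt_mem_nhds hε2)
      have h4 : ∀ᶠ a : ℝ in nhdsWithin 0 (Ioi 0), a ∈ Ioc (0:ℝ) 1 :=
        Ioc_mem_nhdsGT one_pos
      obtain ⟨a, h5, h6⟩ := (h3.and h4).exists
      exact ⟨a, h6.1, h6.2, h5⟩
    obtain ⟨I, R, hIR⟩ := happ a ha0 ha1
    have hvt : ∀ k : Fin N → ℤ, volume (cube a k) ≠ ⊤ := fun k => by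
      rw [volume_cube ha0]; exact ENNReal.ofReal_ne_top
    set e : (Fin N → ℤ) → Lp ℝ 1 (volume : Measure (Eu N)) :=
      fun k => indicatorConstLp 1 (measurableSet_cube ha0 k) (hvt k) (1:ℝ) with he
    set T : ((Fin N → ℤ) → ℝ) → Lp ℝ 1 (volume : Measure (Eu N)) :=
      fun c => ∑ k ∈ I, c k • e k with hT
    have hTc : Continuous T := by
      rw [hT]
      exact continuous_finsetSum _ fun k _ => (continuous_apply k).smul continuous_const
    have hbox : IsCompact (univ.pi fun _ : Fin N → ℤ => Icc (-R) R) :=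
      isCompact_univ_pi fun _ => isCompact_Icc
    obtain ⟨t, htf, htc⟩ := EMetric.totallyBounded_iff.1 (hbox.image hTc).totallyBounded (ε / 2) hε2
    refine ⟨t, htf, ?_⟩
    rintro _ ⟨n, rfl⟩
    obtain ⟨-, c, hcR, hc⟩ := hIR (u n) (hu n) (hA n)
    have hmemT : T c ∈ T '' (univ.pi fun _ : Fin N → ℤ => Icc (-R) R) :=
      ⟨c, fun k _ => abs_le.1 (hcR k), rfl⟩
    have := htc hmemT
    simp only [mem_iUnion, exists_prop] at this ⊢
    obtain ⟨y, hyt, hy⟩ := this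
    refine ⟨y, hyt, ?_⟩
    have hd : edist (f n) (T c) < ε / 2 := by
      refine lt_of_le_of_lt ?_ haε
      refine le_trans (le_of_eq ?_) hc
      rw [Lp.edist_def, eLpNorm_one_eq_lintegral_enorm]
      refine lintegral_congr_ae ?_
      have h1 : (T c : Eu N → ℝ) =ᵐ[volume] fun x => ∑ k ∈ I, (c k • e k : Lp ℝ 1 volume) x := by
        have := Lp.coeFn_finsetSum I (fun k => (c k • e k : Lp ℝ 1 (volume : Measure (Eu N))))
        filter_upwards [this] with x hx
        rw [hT]
        exact hx.trans (Finset.sum_apply _ _ _)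
      have h2 : ∀ k, ((c k • e k : Lp ℝ 1 volume) : Eu N → ℝ) =ᵐ[volume]
          (cube a k).indicator (fun _ => c k) := by
        intro k
        filter_upwards [Lp.coeFn_smul (c k) (e k), indicatorConstLp_coeFn (p := 1)
          (hs := measurableSet_cube ha0 k) (hμs := hvt k) (c := (1:ℝ))] with x hx1 hx2
        rw [hx1, Pi.smul_apply, he, hx2]
        by_cases hxk : x ∈ cube a k <;> simp [hxk]
      have h2' := ae_all_iff.2 h2
      filter_upwards [hfu n, h1, h2'] with x hx1 hx2 hx3
      rw [Pi.sub_apply, hx1, hx2]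
      simp only [hx3]
    calc edist (f n) y ≤ edist (f n) (T c) + edist (T c) y := edist_triangle _ _ _
      _ < ε / 2 + ε / 2 := ENNReal.add_lt_add hd hy
      _ = ε := ENNReal.add_halves ε
  have hcomp : IsCompact (closure (range f)) := htb.closure.isCompact_of_isClosed isClosed_closure
  obtain ⟨g, -, φ, hφ, hlim⟩ := hcomp.tendsto_subseq (x := f) fun n => subset_closure (mem_range_self n)
  have hmeas := tendstoInMeasure_of_tendsto_Lp hlim
  obtain ⟨ψ, hψ, hae⟩ := hmeas.exists_seq_tendsto_ae
  have hgm : AEMeasurable (g : Eu N → ℝ) volume := (Lp.aestronglyMeasurable g).aemeasurable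
  have hconv : ∀ᵐ x, Tendsto (fun n => u (φ (ψ n)) x) atTop (nhds (hgm.mk g x)) := by
    filter_upwards [hae, ae_all_iff.2 hfu, hgm.ae_eq_mk] with x h1 h2 h3
    rw [← h3]
    simpa only [Function.comp, h2] using h1
  refine ⟨hgm.mk g, ⟨hgm.measurable_mk, ?_⟩, fun n => φ (ψ n), hφ.comp hψ, hconv⟩
  rw [ae_restrict_iff' h.isOpen.measurableSet.compl]
  filter_upwards [hconv, ae_all_iff.2 fun n => (hu n).ae_zero h.isOpen.measurableSet]
    with x h1 h2 hx
  refine tendsto_nhds_unique h1 ?_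
  simp only [fun n => h2 n hx]
  exact tendsto_const_nhds

/-! ### A function of finite modular -/

/-- A radial majorant of the modular density of a Lipschitz bump. -/
def radialKernel (N : ℕ) (s r : ℝ) : ℝ :=
  if r ≤ 1 then r ^ (2 * (1 - s) - N) else r ^ (-(N + 2 * s))

lemma radialKernel_nonneg {r : ℝ} (hr : 0 ≤ r) : 0 ≤ radialKernel N s r := by
  unfold radialKernel; split_ifs <;> positivity

lemma measurable_radialKernel : Measurable (radialKernel N s) := by
  unfold radialKernel
  exact Measurable.ite measurableSet_Iic (by fun_prop) (by fun_prop)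

lemma integrable_radialKernel (hN : 0 < N) (hs0 : 0 < s) (hs1 : s < 1) :
    Integrable (fun v : Eu N => radialKernel N s ‖v‖) := by
  have : Nonempty (Fin N) := ⟨⟨0, hN⟩⟩
  have hfr : Module.finrank ℝ (Eu N) = N := by simp
  have key := integrable_fun_norm_addHaar (volume : Measure (Eu N)) (f := radialKernel N s)
  rw [hfr] at key
  rw [key, ← Ioc_union_Ioi_eq_Ioi zero_le_one]
  have hcast : ((N - 1 : ℕ) : ℝ) = (N : ℝ) - 1 := by
    rw [Nat.cast_sub hN, Nat.cast_one]
  refine IntegrableOn.union ?_ ?_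
  · have h1 : IntegrableOn (fun y : ℝ => y ^ (1 - 2 * s)) (Ioc 0 1) := by
      rw [integrableOn_Ioc_iff_integrableOn_Ioo]
      exact (intervalIntegral.integrableOn_Ioo_rpow_iff one_pos).2 (by linarith)
    refine h1.congr_fun (fun y hy => ?_) measurableSet_Ioc
    simp only [radialKernel, if_pos hy.2, smul_eq_mul]
    rw [← Real.rpow_natCast, hcast, ← Real.rpow_add hy.1]
    congr 1; ring
  · have h1 : IntegrableOn (fun y : ℝ => y ^ (-1 - 2 * s)) (Ioi 1) :=
      integrableOn_Ioi_rpow_of_lt (by linarith) one_pos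
    refine h1.congr_fun (fun y hy => ?_) measurableSet_Ioi
    have hy1 : (1:ℝ) < y := hy
    simp only [radialKernel, if_neg (not_le.2 hy1), smul_eq_mul]
    rw [← Real.rpow_natCast, hcast, ← Real.rpow_add (by linarith)]
    congr 1; ring

/-- A cone supported in a small ball is a nonzero element of finite modular. -/
lemma Setting.exists_bump (h : Setting Ω s p q pp qm qp) :
    ∃ u : Eu N → ℝ, Adm Ω u ∧ gagRho Ω s p u < ⊤ ∧ vModular Ω q u ≠ 0 := by
  obtain ⟨x₀, hx₀⟩ := h.nonempty
  obtain ⟨r₀, hr₀, hball⟩ := Metric.isOpen_iff.1 h.isOpen x₀ hx₀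
  set r := min r₀ 1 with hr
  have hr0 : 0 < r := lt_min hr₀ one_pos
  have hr1 : r ≤ 1 := min_le_right _ _
  set u : Eu N → ℝ := fun x => max 0 (r - dist x x₀) with hu
  have hcont : Continuous u := by fun_prop
  have hadm : Adm Ω u := by
    refine ⟨hcont.measurable, ?_⟩
    filter_upwards [ae_restrict_mem h.isOpen.measurableSet.compl] with x hx
    have : ¬ dist x x₀ < r := fun hlt => hx (hball (hlt.trans_le (min_le_left _ _)))
    exact max_eq_left (by linarith)
  have hu0 : ∀ x, 0 ≤ u x := fun x => le_max_left _ _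
  have hu1 : ∀ x, u x ≤ 1 := fun x => max_le zero_le_one (by linarith [dist_nonneg (x := x) (y := x₀)])
  have hlip : ∀ x y, |u x - u y| ≤ ‖x - y‖ := by
    intro x y
    rw [← dist_eq_norm]
    refine (abs_max_sub_max_le_max 0 (r - dist x x₀) 0 (r - dist y x₀)).trans ?_
    rw [sub_self, abs_zero, sub_sub_sub_cancel_left]
    refine max_le dist_nonneg ?_
    rw [dist_comm x y]
    exact abs_dist_sub_le y x x₀
  have hbd : ∀ x y, |u x - u y| ≤ 1 := fun x y =>
    abs_sub_le_iff.2 ⟨by linarith [hu1 x, hu0 y], by linarith [hu1 y, hu0 x]⟩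
  have hs0 := h.s_pos
  have hs1 := h.s_lt
  have hdens : ∀ z ∈ Qset Ω, dens s p u z ≤ radialKernel N s ‖z.1 - z.2‖ := by
    intro z hz
    have hp2 := h.two_le z hz
    rcases (norm_nonneg (z.1 - z.2)).eq_or_lt with h0 | hpos
    · have : |u z.1 - u z.2| = 0 :=
        le_antisymm ((hlip _ _).trans h0.symm.le) (abs_nonneg _)
      unfold dens
      rw [this, Real.zero_rpow (by linarith), zero_div]
      exact radialKernel_nonneg (norm_nonneg _)
    unfold dens radialKernel
    split_ifs with hle
    · calc |u z.1 - u z.2| ^ p z / ‖z.1 - z.2‖ ^ ((N : ℝ) + s * p z)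
          ≤ ‖z.1 - z.2‖ ^ p z / ‖z.1 - z.2‖ ^ ((N : ℝ) + s * p z) := by
            gcongr
            exact hlip _ _
        _ = ‖z.1 - z.2‖ ^ (p z - ((N : ℝ) + s * p z)) := (Real.rpow_sub hpos _ _).symm
        _ ≤ _ := Real.rpow_le_rpow_of_exponent_ge hpos hle (by nlinarith)
    · have hgt : 1 < ‖z.1 - z.2‖ := not_le.1 hle
      calc |u z.1 - u z.2| ^ p z / ‖z.1 - z.2‖ ^ ((N : ℝ) + s * p z)
          ≤ 1 / ‖z.1 - z.2‖ ^ ((N : ℝ) + s * p z) := by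
            gcongr
            exact Real.rpow_le_one (abs_nonneg _) (hbd _ _) (by linarith)
        _ = ‖z.1 - z.2‖ ^ (-((N : ℝ) + s * p z)) := by
            rw [Real.rpow_neg hpos.le, one_div]
        _ ≤ _ := Real.rpow_le_rpow_of_exponent_le hgt.le (by nlinarith)
  refine ⟨u, hadm, ?_, ?_⟩
  · set k : Eu N → ℝ≥0∞ := fun v => ENNReal.ofReal (radialKernel N s ‖v‖) with hk
    have hkm : Measurable k := (measurable_radialKernel.comp measurable_norm).ennreal_ofReal
    have hkf : ∫⁻ v, k v < ⊤ := by
      have := (integrable_radialKernel h.hN hs0 hs1).lintegral_lt_top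
      exact this
    have hkm2 : Measurable (fun z : Eu N × Eu N => k (z.1 - z.2)) :=
      hkm.comp (measurable_fst.sub measurable_snd)
    have hsub : Qset Ω ⊆ Ω ×ˢ univ ∪ univ ×ˢ Ω := by
      intro z hz
      simp only [Qset, mem_compl_iff, mem_prod, not_and_or, not_not] at hz
      simpa using hz
    calc gagRho Ω s p u ≤ ∫⁻ z in Qset Ω, k (z.1 - z.2) :=
          setLIntegral_mono' h.meas_Q fun z hz => ENNReal.ofReal_le_ofReal (hdens z hz)
      _ ≤ ∫⁻ z in Ω ×ˢ univ ∪ univ ×ˢ Ω, k (z.1 - z.2) := lintegral_mono_set hsub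
      _ ≤ (∫⁻ z in Ω ×ˢ univ, k (z.1 - z.2)) + ∫⁻ z in univ ×ˢ Ω, k (z.1 - z.2) :=
          lintegral_union_le _ _ _
      _ = (∫⁻ v, k v) * volume Ω + (∫⁻ v, k v) * volume Ω := by
          congr 1
          · rw [Measure.volume_eq_prod, ← Measure.prod_restrict, Measure.restrict_univ,
              lintegral_prod _ hkm2.aemeasurable]
            simp only [lintegral_sub_left_eq_self k]
            rw [lintegral_const, Measure.restrict_apply MeasurableSet.univ, univ_inter]
          · rw [Measure.volume_eq_prod, ← Measure.prod_restrict, Measure.restrict_univ,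
              lintegral_prod_symm _ hkm2.aemeasurable]
            simp only [lintegral_sub_right_eq_self k]
            rw [lintegral_const, Measure.restrict_apply MeasurableSet.univ, univ_inter]
      _ < ⊤ := by
          have := ENNReal.mul_lt_top hkf h.vol_lt_top
          exact ENNReal.add_lt_top.2 ⟨this, this⟩
  · rw [Ne, h.vModular_eq_zero hadm]
    intro hz
    have h0 := (hcont.ae_eq_iff_eq volume (continuous_const (y := (0:ℝ)))).1 hz
    have := congrFun h0 x₀
    simp [hu] at this
    linarith

/-! ### Projection onto the Nehari manifold -/

lemma Setting.vModular_lt_top (h : Setting Ω s p q pp qm qp) {u : Eu N → ℝ} (hu : Adm Ω u)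
    (hA : gagRho Ω s p u < ⊤) : vModular Ω q u < ⊤ := by
  obtain ⟨C, hC, hb⟩ := h.vModular_bound _ hA
  exact (hb u hu le_rfl).trans_lt hC

/-- Continuity of a parametric lower Lebesgue integral under an integrable majorant. -/
lemma continuousOn_lintegral_of_dominated {α : Type*} [MeasurableSpace α] {μ : Measure α}
    {F : ℝ → α → ℝ≥0∞} {S : Set ℝ} (g : α → ℝ≥0∞) (hm : ∀ t ∈ S, AEMeasurable (F t) μ)
    (hb : ∀ t ∈ S, F t ≤ᵐ[μ] g) (hg : ∫⁻ a, g a ∂μ ≠ ⊤)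
    (hc : ∀ a, ContinuousOn (fun t => F t a) S) :
    ContinuousOn (fun t => ∫⁻ a, F t a ∂μ) S := by
  rw [continuousOn_iff_continuous_domRestrict, continuous_iff_seqContinuous]
  intro t t₀ ht
  refine tendsto_lintegral_of_dominated_convergence' g (fun n => hm _ (t n).2)
    (fun n => hb _ (t n).2) hg (ae_of_all _ fun a => ?_)
  exact ((continuousOn_iff_continuous_domRestrict.1 (hc a)).tendsto t₀).comp ht

lemma Setting.continuousOn_gagRho_smul (h : Setting Ω s p q pp qm qp) {w : Eu N → ℝ}
    (hw : Adm Ω w) (hA : gagRho Ω s p w < ⊤) {τ : ℝ} (hτ : 0 < τ) :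
    ContinuousOn (fun t : ℝ => gagRho Ω s p (fun x => t * w x)) (Icc τ 1) := by
  refine continuousOn_lintegral_of_dominated (fun z => ENNReal.ofReal (dens s p w z))
    (fun t _ => (h.aem_dens (hw.smul t).meas).ennreal_ofReal) (fun t ht => ?_) hA.ne (fun z => ?_)
  · filter_upwards [ae_restrict_mem h.meas_Q] with z hz
    have ht0 : 0 ≤ t := hτ.le.trans ht.1
    refine ENNReal.ofReal_le_ofReal ((dens_smul ht0 w z).trans_le
      (mul_le_of_le_one_left (dens_nonneg _ _) ?_))
    exact Real.rpow_le_one ht0 ht.2 (by linarith [h.two_le z hz])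
  · have h1 : ContinuousOn (fun t : ℝ => t ^ p z * dens s p w z) (Icc τ 1) :=
      (continuousOn_id.rpow_const fun t ht => Or.inl (hτ.trans_le ht.1).ne').mul continuousOn_const
    exact ENNReal.continuous_ofReal.comp_continuousOn
      (h1.congr fun t ht => dens_smul (hτ.le.trans ht.1) w z)

lemma Setting.continuousOn_vModular_smul (h : Setting Ω s p q pp qm qp) {w : Eu N → ℝ}
    (hw : Adm Ω w) (hB : vModular Ω q w < ⊤) {τ : ℝ} (hτ : 0 < τ) :
    ContinuousOn (fun t : ℝ => vModular Ω q (fun x => t * w x)) (Icc τ 1) := by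
  refine continuousOn_lintegral_of_dominated (fun x => ENNReal.ofReal (|w x| ^ q x))
    (fun t _ => (h.aem_q (hw.smul t).meas).ennreal_ofReal) (fun t ht => ?_) hB.ne (fun x => ?_)
  · filter_upwards [ae_restrict_mem h.isOpen.measurableSet] with x hx
    have ht0 : 0 ≤ t := hτ.le.trans ht.1
    refine ENNReal.ofReal_le_ofReal ((abs_smul_rpow ht0 _ _).trans_le
      (mul_le_of_le_one_left (by positivity) ?_))
    exact Real.rpow_le_one ht0 ht.2 (h.q_pos hx).le
  · have h1 : ContinuousOn (fun t : ℝ => t ^ q x * |w x| ^ q x) (Icc τ 1) :=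
      (continuousOn_id.rpow_const fun t ht => Or.inl (hτ.trans_le ht.1).ne').mul continuousOn_const
    exact ENNReal.continuous_ofReal.comp_continuousOn
      (h1.congr fun t ht => abs_smul_rpow (hτ.le.trans ht.1) _ _)

/-- A nonzero function with `A(w) ≤ B(w)`, where `A` is the Gagliardo and `B` the Lebesgue modular,
is brought onto the Nehari manifold by a factor `t ≤ 1`: for small `t` the modular `A(t w)`
dominates because `pp < qm`. -/
lemma Setting.exists_proj (h : Setting Ω s p q pp qm qp) {w : Eu N → ℝ} (hw : Adm Ω w)
    (hA : gagRho Ω s p w < ⊤) (hB0 : vModular Ω q w ≠ 0)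
    (hAB : gagRho Ω s p w ≤ vModular Ω q w) :
    ∃ t : ℝ, 0 < t ∧ t ≤ 1 ∧
      gagRho Ω s p (fun x => t * w x) = vModular Ω q (fun x => t * w x) := by
  have hB := h.vModular_lt_top hw hA
  have hA0 := h.gagRho_ne_zero hw hB0
  have hpq := h.pq
  set a := (gagRho Ω s p w).toReal with ha
  set b := (vModular Ω q w).toReal with hb
  have ha0 : 0 < a := ENNReal.toReal_pos hA0 hA.ne
  have hb0 : 0 < b := ENNReal.toReal_pos hB0 hB.ne
  have hab : a ≤ b := ENNReal.toReal_mono hB.ne hAB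
  have hab1 : a / b ≤ 1 := (div_le_one hb0).2 hab
  set τ := (a / b) ^ (1 / (qm - pp)) with hτ
  have hτ0 : 0 < τ := by positivity
  have hτ1 : τ ≤ 1 := Real.rpow_le_one (by positivity) hab1
    (one_div_nonneg.2 (by linarith))
  have hτe : τ ^ (qm - pp) = a / b := by
    rw [hτ, ← Real.rpow_mul (by positivity), one_div, inv_mul_cancel₀ (by linarith),
      Real.rpow_one]
  have htop : ∀ t ∈ Icc τ 1, gagRho Ω s p (fun x => t * w x) < ⊤ ∧
      vModular Ω q (fun x => t * w x) < ⊤ := by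
    intro t ht
    have ht0 : 0 < t := hτ0.trans_le ht.1
    have hAt : gagRho Ω s p (fun x => t * w x) < ⊤ := by
      refine lt_of_le_of_lt (setLIntegral_mono' h.meas_Q fun z hz => ?_) hA
      refine ENNReal.ofReal_le_ofReal ?_
      change dens s p (fun x => t * w x) z ≤ dens s p w z
      rw [dens_smul ht0.le]
      refine mul_le_of_le_one_left (dens_nonneg _ _) ?_
      exact Real.rpow_le_one ht0.le ht.2 (by linarith [h.two_le z hz])
    exact ⟨hAt, h.vModular_lt_top (hw.smul t) hAt⟩
  set F : ℝ → ℝ := fun t => (gagRho Ω s p (fun x => t * w x)).toReal -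
    (vModular Ω q (fun x => t * w x)).toReal with hF
  have hFc : ContinuousOn F (Icc τ 1) := by
    refine ContinuousOn.sub ?_ ?_
    · intro t ht
      exact (ENNReal.tendsto_toReal (htop t ht).1.ne).comp
        (h.continuousOn_gagRho_smul hw hA hτ0 t ht)
    · intro t ht
      exact (ENNReal.tendsto_toReal (htop t ht).2.ne).comp
        (h.continuousOn_vModular_smul hw hB hτ0 t ht)
  have hF1 : F 1 ≤ 0 := by
    simp only [hF, one_mul]
    linarith
  have hFτ : 0 ≤ F τ := by
    have hτm := htop τ ⟨le_rfl, hτ1⟩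
    have h1 := ENNReal.toReal_mono hτm.1.ne (h.le_gagRho_smul hτ0 hτ1 w)
    have h2 := ENNReal.toReal_mono (ENNReal.mul_ne_top ENNReal.ofReal_ne_top hB.ne)
      (h.vModular_smul_le hτ0 hτ1 w)
    rw [ENNReal.toReal_mul, ENNReal.toReal_ofReal (by positivity)] at h1 h2
    rw [← ha] at h1
    rw [← hb] at h2
    have h3 : τ ^ qm * b = τ ^ pp * a := by
      have : τ ^ qm = τ ^ pp * τ ^ (qm - pp) := by
        rw [← Real.rpow_add hτ0]; congr 1; ring
      rw [this, hτe]; field_simp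
    simp only [hF]
    linarith
  obtain ⟨t, ht, htF⟩ := intermediate_value_Icc' hτ1 hFc ⟨hF1, hFτ⟩
  refine ⟨t, hτ0.trans_le ht.1, ht.2, ?_⟩
  rw [← ENNReal.toReal_eq_toReal_iff' (htop t ht).1.ne (htop t ht).2.ne]
  simp only [hF] at htF
  linarith

lemma Setting.smul_ne_zero (h : Setting Ω s p q pp qm qp) {w : Eu N → ℝ} (hw : Adm Ω w)
    (hB0 : vModular Ω q w ≠ 0) {t : ℝ} (ht : 0 < t) : vModular Ω q (fun x => t * w x) ≠ 0 := by
  rw [Ne, h.vModular_eq_zero (hw.smul t)]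
  rw [Ne, h.vModular_eq_zero hw] at hB0
  intro hz
  apply hB0
  filter_upwards [hz] with x hx
  simpa [ht.ne'] using hx

/-- The Nehari manifold is nonempty. -/
lemma Setting.exists_nehari (h : Setting Ω s p q pp qm qp) :
    ∃ u : Eu N → ℝ, Adm Ω u ∧ gagRho Ω s p u < ⊤ ∧ vModular Ω q u ≠ 0 ∧
      gagRho Ω s p u = vModular Ω q u := by
  obtain ⟨u, hu, hA, hB0⟩ := h.exists_bump
  have hB := h.vModular_lt_top hu hA
  have hpq := h.pq
  set a := (gagRho Ω s p u).toReal with ha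
  set b := (vModular Ω q u).toReal with hb
  have ha0 : 0 < a := ENNReal.toReal_pos (h.gagRho_ne_zero hu hB0) hA.ne
  have hb0 : 0 < b := ENNReal.toReal_pos hB0 hB.ne
  set T := max 1 ((a / b) ^ (1 / (qm - pp))) with hT
  have hT1 : 1 ≤ T := le_max_left _ _
  have hT0 : 0 < T := by linarith
  have hTe : a / b ≤ T ^ (qm - pp) := by
    have : ((a / b) ^ (1 / (qm - pp))) ^ (qm - pp) = a / b := by
      rw [← Real.rpow_mul (by positivity), one_div, inv_mul_cancel₀ (by linarith), Real.rpow_one]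
    rw [← this]
    exact Real.rpow_le_rpow (by positivity) (le_max_right _ _) (by linarith)
  have hAT := h.gagRho_smul_le hT1 u
  have hBT := h.le_vModular_smul hT1 u
  have hATt : gagRho Ω s p (fun x => T * u x) < ⊤ :=
    hAT.trans_lt (ENNReal.mul_lt_top ENNReal.ofReal_lt_top hA)
  have hmid : ENNReal.ofReal (T ^ pp) * gagRho Ω s p u ≤
      ENNReal.ofReal (T ^ qm) * vModular Ω q u := by
    rw [← ENNReal.ofReal_toReal hA.ne, ← ENNReal.ofReal_toReal hB.ne,
      ← ENNReal.ofReal_mul (by positivity), ← ENNReal.ofReal_mul (by positivity)]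
    refine ENNReal.ofReal_le_ofReal ?_
    have h3 : T ^ qm = T ^ pp * T ^ (qm - pp) := by
      rw [← Real.rpow_add hT0]; congr 1; ring
    rw [h3, mul_assoc]
    gcongr
    rwa [div_le_iff₀ hb0] at hTe
  have hw := hu.smul T
  have hw0 := h.smul_ne_zero hu hB0 hT0
  obtain ⟨t, ht0, ht1, ht⟩ := h.exists_proj hw hATt hw0 (hAT.trans (hmid.trans hBT))
  refine ⟨_, hw.smul t, ?_, h.smul_ne_zero hw hw0 ht0, ht⟩
  rw [ht]
  refine (h.vModular_smul_le ht0 ht1 _).trans_lt ?_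
  exact ENNReal.mul_lt_top ENNReal.ofReal_lt_top (h.vModular_lt_top hw hATt)

/-! ### The reduced energy -/

lemma Setting.memW0_iff (h : Setting Ω s p q pp qm qp) {u : Eu N → ℝ} :
    MemW0 Ω s p u ↔ Adm Ω u ∧ gagRho Ω s p u < ⊤ := by
  constructor
  · rintro ⟨hm, hz, l, hl, hfin⟩
    refine ⟨⟨hm, hz⟩, ?_⟩
    set L := max l 1 with hL
    have hL1 : 1 ≤ L := le_max_right _ _
    have key : gagRho Ω s p u ≤ ENNReal.ofReal (L ^ pp) * gagModularOn (Qset Ω) s p l u := by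
      unfold gagRho gagModularOn
      rw [← lintegral_const_mul' _ _ ENNReal.ofReal_ne_top]
      refine setLIntegral_mono' h.meas_Q fun z hz => ?_
      rw [← ENNReal.ofReal_mul (by positivity)]
      refine ENNReal.ofReal_le_ofReal ?_
      have hlp : 0 < l ^ p z := by positivity
      have hle : l ^ p z ≤ L ^ pp :=
        (Real.rpow_le_rpow hl.le (le_max_left _ _) (by linarith [h.two_le z hz])).trans
          (Real.rpow_le_rpow_of_exponent_le hL1 (h.p_le z hz))
      rw [mul_comm (l ^ p z), ← div_div, ← mul_div_assoc, le_div_iff₀ hlp, mul_comm]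
      gcongr
    exact key.trans_lt (ENNReal.mul_lt_top ENNReal.ofReal_lt_top hfin)
  · rintro ⟨hu, hA⟩
    refine ⟨hu.meas, hu.zero, 1, one_pos, ?_⟩
    unfold gagModularOn
    simp only [Real.one_rpow, one_mul]
    exact hA

lemma Setting.integrable_dens (h : Setting Ω s p q pp qm qp) {u : Eu N → ℝ} (hu : Adm Ω u)
    (hA : gagRho Ω s p u < ⊤) : IntegrableOn (dens s p u) (Qset Ω) := by
  refine ⟨(h.aem_dens hu.meas).aestronglyMeasurable, ?_⟩
  rw [hasFiniteIntegral_iff_ofReal (ae_of_all _ fun z => dens_nonneg u z)]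
  exact hA

lemma Setting.integrable_q (h : Setting Ω s p q pp qm qp) {u : Eu N → ℝ} (hu : Adm Ω u)
    (hB : vModular Ω q u < ⊤) : IntegrableOn (fun x => |u x| ^ q x) Ω := by
  refine ⟨(h.aem_q hu.meas).aestronglyMeasurable, ?_⟩
  rw [hasFiniteIntegral_iff_ofReal (ae_of_all _ fun z => by positivity)]
  exact hB

lemma Setting.integral_dens (h : Setting Ω s p q pp qm qp) {u : Eu N → ℝ} (hu : Adm Ω u) :
    ∫ z in Qset Ω, dens s p u z = (gagRho Ω s p u).toReal :=
  integral_eq_lintegral_of_nonneg_ae (ae_of_all _ fun z => dens_nonneg u z)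
    (h.aem_dens hu.meas).aestronglyMeasurable

lemma Setting.integral_q (h : Setting Ω s p q pp qm qp) {u : Eu N → ℝ} (hu : Adm Ω u) :
    ∫ x in Ω, |u x| ^ q x = (vModular Ω q u).toReal :=
  integral_eq_lintegral_of_nonneg_ae (ae_of_all _ fun z => by positivity)
    (h.aem_q hu.meas).aestronglyMeasurable

lemma Setting.nehariI_eq_zero (h : Setting Ω s p q pp qm qp) {u : Eu N → ℝ} (hu : Adm Ω u)
    (hA : gagRho Ω s p u < ⊤) :
    nehariI Ω s p q u = 0 ↔ gagRho Ω s p u = vModular Ω q u := by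
  have e : nehariI Ω s p q u = (gagRho Ω s p u).toReal - (vModular Ω q u).toReal := by
    rw [← h.integral_dens hu, ← h.integral_q hu]; rfl
  rw [e, sub_eq_zero, ENNReal.toReal_eq_toReal_iff' hA.ne (h.vModular_lt_top hu hA).ne]

/-- The functional `E - I / pp`, which is nonnegative and agrees with the energy on the Nehari
manifold. -/
def reducedE (Ω : Set (Eu N)) (s : ℝ) (p : Eu N × Eu N → ℝ) (q : Eu N → ℝ) (pp : ℝ)
    (u : Eu N → ℝ) : ℝ≥0∞ :=
  (∫⁻ z in Qset Ω, ENNReal.ofReal ((1 / p z - 1 / pp) * dens s p u z)) +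
    ∫⁻ x in Ω, ENNReal.ofReal ((1 / pp - 1 / q x) * |u x| ^ q x)

lemma Setting.coef_p (h : Setting Ω s p q pp qm qp) {z : Eu N × Eu N} (hz : z ∈ Qset Ω) :
    0 ≤ 1 / p z - 1 / pp ∧ 1 / p z - 1 / pp ≤ 1 := by
  have h2 := h.two_le z hz
  have h3 := h.p_le z hz
  have h4 : 1 / pp ≤ 1 / p z := one_div_le_one_div_of_le (by linarith) h3
  have h5 : 1 / p z ≤ 1 := by rw [div_le_one (by linarith)]; linarith
  have h6 : 0 < 1 / pp := one_div_pos.2 (by linarith)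
  constructor <;> linarith

lemma Setting.coef_q (h : Setting Ω s p q pp qm qp) {x : Eu N} (hx : x ∈ Ω) :
    1 / pp - 1 / qm ≤ 1 / pp - 1 / q x ∧ 1 / pp - 1 / q x ≤ 1 := by
  have h2 := h.two_le_pp
  have h3 := h.pq
  have h4 := h.le_q x hx
  have h5 : 1 / q x ≤ 1 / qm := one_div_le_one_div_of_le (by linarith) h4
  have h6 : 1 / pp ≤ 1 := by rw [div_le_one (by linarith)]; linarith
  have h7 : 0 < 1 / q x := one_div_pos.2 (by linarith)
  constructor <;> linarith

lemma Setting.coef_pos (h : Setting Ω s p q pp qm qp) : 0 < 1 / pp - 1 / qm := by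
  have h2 := h.two_le_pp
  have h3 := h.pq
  have := one_div_lt_one_div_of_lt (by linarith) h3
  linarith

lemma Setting.aem_coef_p (h : Setting Ω s p q pp qm qp) {u : Eu N → ℝ} (hu : Adm Ω u) :
    AEMeasurable (fun z => (1 / p z - 1 / pp) * dens s p u z) (volume.restrict (Qset Ω)) :=
  ((h.pmeas.const_div 1).sub_const _).mul (h.aem_dens hu.meas)

lemma Setting.aem_coef_q (h : Setting Ω s p q pp qm qp) {u : Eu N → ℝ} (hu : Adm Ω u) :
    AEMeasurable (fun x => (1 / pp - 1 / q x) * |u x| ^ q x) (volume.restrict Ω) :=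
  ((h.qmeas.const_div 1).const_sub _).mul (h.aem_q hu.meas)

lemma Setting.reducedE_le (h : Setting Ω s p q pp qm qp) (u : Eu N → ℝ) :
    reducedE Ω s p q pp u ≤ gagRho Ω s p u + vModular Ω q u := by
  refine add_le_add ?_ ?_
  · refine setLIntegral_mono' h.meas_Q fun z hz => ENNReal.ofReal_le_ofReal ?_
    exact mul_le_of_le_one_left (dens_nonneg _ _) (h.coef_p hz).2
  · refine setLIntegral_mono' h.isOpen.measurableSet fun x hx => ENNReal.ofReal_le_ofReal ?_
    exact mul_le_of_le_one_left (by positivity) (h.coef_q hx).2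

lemma Setting.le_reducedE (h : Setting Ω s p q pp qm qp) (u : Eu N → ℝ) :
    ENNReal.ofReal (1 / pp - 1 / qm) * vModular Ω q u ≤ reducedE Ω s p q pp u := by
  refine le_add_left ?_
  unfold vModular
  rw [← lintegral_const_mul' _ _ ENNReal.ofReal_ne_top]
  refine setLIntegral_mono' h.isOpen.measurableSet fun x hx => ?_
  rw [← ENNReal.ofReal_mul h.coef_pos.le]
  refine ENNReal.ofReal_le_ofReal ?_
  exact mul_le_mul_of_nonneg_right (h.coef_q hx).1 (by positivity)

lemma Setting.reducedE_smul_le (h : Setting Ω s p q pp qm qp) {t : ℝ} (ht0 : 0 < t) (ht : t ≤ 1)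
    (u : Eu N → ℝ) : reducedE Ω s p q pp (fun x => t * u x) ≤ reducedE Ω s p q pp u := by
  refine add_le_add ?_ ?_
  · refine setLIntegral_mono' h.meas_Q fun z hz => ENNReal.ofReal_le_ofReal ?_
    refine mul_le_mul_of_nonneg_left ?_ (h.coef_p hz).1
    rw [dens_smul ht0.le]
    refine mul_le_of_le_one_left (dens_nonneg _ _) ?_
    exact Real.rpow_le_one ht0.le ht (by linarith [h.two_le z hz])
  · refine setLIntegral_mono' h.isOpen.measurableSet fun x hx => ENNReal.ofReal_le_ofReal ?_
    refine mul_le_mul_of_nonneg_left ?_ (h.coef_pos.le.trans (h.coef_q hx).1)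
    rw [abs_smul_rpow ht0.le]
    exact mul_le_of_le_one_left (by positivity) (Real.rpow_le_one ht0.le ht (h.q_pos hx).le)

lemma Setting.energyE_eq (h : Setting Ω s p q pp qm qp) {u : Eu N → ℝ} (hu : Adm Ω u)
    (hA : gagRho Ω s p u < ⊤) (hAB : gagRho Ω s p u = vModular Ω q u) :
    energyE Ω s p q u = (reducedE Ω s p q pp u).toReal := by
  have hB := h.vModular_lt_top hu hA
  have hmΩ := h.isOpen.measurableSet
  have hid := h.integrable_dens hu hA
  have hiq := h.integrable_q hu hB
  have hfin : reducedE Ω s p q pp u < ⊤ :=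
    (h.reducedE_le u).trans_lt (ENNReal.add_lt_top.2 ⟨hA, hB⟩)
  have hfin' := ENNReal.add_lt_top.1 hfin
  have hi1 : IntegrableOn (fun z => (1 / p z - 1 / pp) * dens s p u z) (Qset Ω) := by
    refine Integrable.mono' hid (h.aem_coef_p hu).aestronglyMeasurable ?_
    filter_upwards [ae_restrict_mem h.meas_Q] with z hz
    have hc := h.coef_p hz
    have hd := dens_nonneg (s := s) (p := p) u z
    rw [Real.norm_of_nonneg (mul_nonneg hc.1 hd)]
    exact mul_le_of_le_one_left hd hc.2
  have hi2 : IntegrableOn (fun x => (1 / pp - 1 / q x) * |u x| ^ q x) Ω := by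
    refine Integrable.mono' hiq (h.aem_coef_q hu).aestronglyMeasurable ?_
    filter_upwards [ae_restrict_mem hmΩ] with x hx
    have hc := h.coef_q hx
    rw [Real.norm_of_nonneg (mul_nonneg (h.coef_pos.le.trans hc.1) (by positivity))]
    exact mul_le_of_le_one_left (by positivity) hc.2
  have e1 : ∫ z in Qset Ω, (1 / p z - 1 / pp) * dens s p u z =
      (∫⁻ z in Qset Ω, ENNReal.ofReal ((1 / p z - 1 / pp) * dens s p u z)).toReal := by
    refine integral_eq_lintegral_of_nonneg_ae ?_ (h.aem_coef_p hu).aestronglyMeasurable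
    filter_upwards [ae_restrict_mem h.meas_Q] with z hz
    exact mul_nonneg (h.coef_p hz).1 (dens_nonneg _ _)
  have e2 : ∫ x in Ω, (1 / pp - 1 / q x) * |u x| ^ q x =
      (∫⁻ x in Ω, ENNReal.ofReal ((1 / pp - 1 / q x) * |u x| ^ q x)).toReal := by
    refine integral_eq_lintegral_of_nonneg_ae ?_ (h.aem_coef_q hu).aestronglyMeasurable
    filter_upwards [ae_restrict_mem hmΩ] with x hx
    exact mul_nonneg (h.coef_pos.le.trans (h.coef_q hx).1) (by positivity)
  have f1 : ∫ z in Qset Ω, |u z.1 - u z.2| ^ p z / (p z * ‖z.1 - z.2‖ ^ ((N : ℝ) + s * p z)) =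
      (∫ z in Qset Ω, (1 / p z - 1 / pp) * dens s p u z) +
        1 / pp * (gagRho Ω s p u).toReal := by
    rw [← h.integral_dens hu, ← integral_const_mul, ← integral_add hi1 (hid.const_mul _)]
    refine integral_congr_ae (ae_of_all _ fun z => ?_)
    simp only [dens]
    rw [mul_comm (p z), ← div_div]
    ring
  have f2 : ∫ x in Ω, |u x| ^ q x / q x =
      1 / pp * (vModular Ω q u).toReal - ∫ x in Ω, (1 / pp - 1 / q x) * |u x| ^ q x := by
    rw [← h.integral_q hu, ← integral_const_mul, ← integral_sub (hiq.const_mul _) hi2]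
    refine integral_congr_ae (ae_of_all _ fun x => ?_)
    simp only
    ring
  unfold energyE
  rw [f1, f2, e1, e2, hAB, reducedE, ENNReal.toReal_add hfin'.1.ne hfin'.2.ne]
  ring

/-! ### Semicontinuity and the minimizer -/

/-- Fatou's lemma along an a.e. convergent sequence. -/
lemma lintegral_le_liminf_of_tendsto {α : Type*} [MeasurableSpace α] {μ : Measure α}
    {f : ℕ → α → ℝ≥0∞} {g : α → ℝ≥0∞} (hm : ∀ n, AEMeasurable (f n) μ)
    (hlim : ∀ᵐ a ∂μ, Tendsto (fun n => f n a) atTop (nhds (g a))) :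
    ∫⁻ a, g a ∂μ ≤ liminf (fun n => ∫⁻ a, f n a ∂μ) atTop := by
  refine le_trans (le_of_eq (lintegral_congr_ae ?_)) (lintegral_liminf_le' hm)
  filter_upwards [hlim] with a ha
  exact ha.liminf_eq.symm

lemma ENNReal.liminf_add_liminf_le (a b : ℕ → ℝ≥0∞) :
    liminf a atTop + liminf b atTop ≤ liminf (fun n => a n + b n) atTop := by
  simp only [liminf_eq_iSup_iInf_of_nat]
  rw [ENNReal.iSup_add_iSup_of_monotone]
  · refine iSup_mono fun n => le_iInf₂ fun i hi => ?_
    exact add_le_add (iInf₂_le i hi) (iInf₂_le i hi)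
  · exact fun m n hmn => le_iInf₂ fun i hi => iInf₂_le i (hmn.trans hi)
  · exact fun m n hmn => le_iInf₂ fun i hi => iInf₂_le i (hmn.trans hi)

section Limits

variable {v : ℕ → Eu N → ℝ} {w : Eu N → ℝ}

lemma Setting.tendsto_dens (h : Setting Ω s p q pp qm qp)
    (hlim : ∀ᵐ x, Tendsto (fun n => v n x) atTop (nhds (w x))) :
    ∀ᵐ z ∂(volume.restrict (Qset Ω)),
      Tendsto (fun n => dens s p (v n) z) atTop (nhds (dens s p w z)) := by
  have h1 : ∀ᵐ z : Eu N × Eu N, Tendsto (fun n => v n z.1) atTop (nhds (w z.1)) :=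
    Measure.quasiMeasurePreserving_fst.ae hlim
  have h2 : ∀ᵐ z : Eu N × Eu N, Tendsto (fun n => v n z.2) atTop (nhds (w z.2)) :=
    Measure.quasiMeasurePreserving_snd.ae hlim
  filter_upwards [ae_restrict_of_ae h1, ae_restrict_of_ae h2, ae_restrict_mem h.meas_Q]
    with z hz1 hz2 hz
  exact ((hz1.sub hz2).abs.rpow_const (Or.inr (by linarith [h.two_le z hz]))).div_const _

lemma Setting.gagRho_le_liminf (h : Setting Ω s p q pp qm qp) (hv : ∀ n, Adm Ω (v n))
    (hlim : ∀ᵐ x, Tendsto (fun n => v n x) atTop (nhds (w x))) :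
    gagRho Ω s p w ≤ liminf (fun n => gagRho Ω s p (v n)) atTop := by
  refine lintegral_le_liminf_of_tendsto
    (fun n => (h.aem_dens (hv n).meas).ennreal_ofReal) ?_
  filter_upwards [h.tendsto_dens hlim] with z hz
  exact ENNReal.tendsto_ofReal hz

lemma Setting.reducedE_le_liminf (h : Setting Ω s p q pp qm qp) (hv : ∀ n, Adm Ω (v n))
    (hlim : ∀ᵐ x, Tendsto (fun n => v n x) atTop (nhds (w x))) :
    reducedE Ω s p q pp w ≤ liminf (fun n => reducedE Ω s p q pp (v n)) atTop := by
  refine le_trans (add_le_add ?_ ?_) (ENNReal.liminf_add_liminf_le _ _)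
  · refine lintegral_le_liminf_of_tendsto (fun n => (h.aem_coef_p (hv n)).ennreal_ofReal) ?_
    filter_upwards [h.tendsto_dens hlim] with z hz
    exact ENNReal.tendsto_ofReal (hz.const_mul _)
  · refine lintegral_le_liminf_of_tendsto (fun n => (h.aem_coef_q (hv n)).ennreal_ofReal) ?_
    filter_upwards [ae_restrict_of_ae hlim, ae_restrict_mem h.isOpen.measurableSet] with x hx hxΩ
    exact ENNReal.tendsto_ofReal
      ((hx.abs.rpow_const (Or.inr (h.q_pos hxΩ).le)).const_mul _)

/-- Subcriticality makes the `q`-modular upper semicontinuous along a.e. convergent sequences of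
bounded Gagliardo modular: below a level `K` dominated convergence applies, and the part above `K`
is uniformly small. -/
lemma Setting.limsup_vModular_le (h : Setting Ω s p q pp qm qp) (hv : ∀ n, Adm Ω (v n))
    {M : ℝ≥0∞} (hM : M < ⊤) (hA : ∀ n, gagRho Ω s p (v n) ≤ M)
    (hlim : ∀ᵐ x, Tendsto (fun n => v n x) atTop (nhds (w x))) :
    limsup (fun n => vModular Ω q (v n)) atTop ≤ vModular Ω q w := by
  obtain ⟨q', hq', hb⟩ := h.lq_bound
  obtain ⟨C, hC, hb⟩ := hb M hM
  have hmΩ := h.isOpen.measurableSet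
  have hstep : ∀ K : ℝ, 1 ≤ K → limsup (fun n => vModular Ω q (v n)) atTop ≤
      vModular Ω q w + ENNReal.ofReal (K ^ (-(q' - qp))) * C := by
    intro K hK
    have hK0 : 0 < K := by linarith
    have hT : Tendsto (fun n => ∫⁻ x in Ω, ENNReal.ofReal (min |v n x| K ^ q x)) atTop
        (nhds (∫⁻ x in Ω, ENNReal.ofReal (min |w x| K ^ q x))) := by
      refine tendsto_lintegral_of_dominated_convergence' (fun _ => ENNReal.ofReal (K ^ qp))
        (fun n => ?_) (fun n => ?_) ?_ ?_
      · have hm : AEMeasurable (fun x => min |v n x| K) (volume.restrict Ω) := by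
          have := (hv n).meas
          exact (Measurable.min (by fun_prop) measurable_const).aemeasurable
        exact (hm.pow h.qmeas).ennreal_ofReal
      · filter_upwards [ae_restrict_mem hmΩ] with x hx
        refine ENNReal.ofReal_le_ofReal ?_
        calc min |v n x| K ^ q x ≤ K ^ q x :=
              Real.rpow_le_rpow (by positivity) (min_le_right _ _) (h.q_pos hx).le
          _ ≤ K ^ qp := Real.rpow_le_rpow_of_exponent_le hK (h.q_le x hx)
      · rw [lintegral_const, Measure.restrict_apply MeasurableSet.univ, univ_inter]
        exact (ENNReal.mul_lt_top ENNReal.ofReal_lt_top h.vol_lt_top).ne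
      · filter_upwards [ae_restrict_of_ae hlim, ae_restrict_mem hmΩ] with x hx hxΩ
        exact ENNReal.tendsto_ofReal
          ((hx.abs.min tendsto_const_nhds).rpow_const (Or.inr (h.q_pos hxΩ).le))
    have hT' := hT.add_const (ENNReal.ofReal (K ^ (-(q' - qp))) * C)
    calc limsup (fun n => vModular Ω q (v n)) atTop
        ≤ limsup (fun n => (∫⁻ x in Ω, ENNReal.ofReal (min |v n x| K ^ q x)) +
            ENNReal.ofReal (K ^ (-(q' - qp))) * C) atTop := by
          refine limsup_le_limsup (Eventually.of_forall fun n => ?_)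
          refine (h.vModular_le_trunc hq' hK (hv n)).trans ?_
          exact add_le_add le_rfl (mul_le_mul' le_rfl (hb (v n) (hv n) (hA n)))
      _ = (∫⁻ x in Ω, ENNReal.ofReal (min |w x| K ^ q x)) +
            ENNReal.ofReal (K ^ (-(q' - qp))) * C := hT'.limsup_eq
      _ ≤ _ := by
          refine add_le_add (setLIntegral_mono' hmΩ fun x hx => ?_) le_rfl
          refine ENNReal.ofReal_le_ofReal ?_
          exact Real.rpow_le_rpow (by positivity) (min_le_left _ _) (h.q_pos hx).le
  have ht : Tendsto (fun K : ℝ => vModular Ω q w + ENNReal.ofReal (K ^ (-(q' - qp))) * C) atTop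
      (nhds (vModular Ω q w)) := by
    have h1 := tendsto_rpow_neg_atTop (y := q' - qp) (by linarith)
    have h2 := (ENNReal.Tendsto.mul_const (ENNReal.tendsto_ofReal h1) (Or.inr hC.ne)).const_add
      (vModular Ω q w)
    simpa using h2
  exact ge_of_tendsto ht ((eventually_ge_atTop 1).mono hstep)

end Limits

/-- The Nehari manifold, in terms of the extended-real modulars. -/
def nehariSet (Ω : Set (Eu N)) (s : ℝ) (p : Eu N × Eu N → ℝ) (q : Eu N → ℝ) : Set (Eu N → ℝ) :=
  {u | Adm Ω u ∧ gagRho Ω s p u < ⊤ ∧ vModular Ω q u ≠ 0 ∧ gagRho Ω s p u = vModular Ω q u}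

lemma Setting.mem_nehariSet_iff (h : Setting Ω s p q pp qm qp) {u : Eu N → ℝ} :
    u ∈ nehariSet Ω s p q ↔
      MemW0 Ω s p u ∧ ¬ u =ᵐ[volume] (0 : Eu N → ℝ) ∧ nehariI Ω s p q u = 0 := by
  constructor
  · rintro ⟨hu, hA, hB, hAB⟩
    exact ⟨h.memW0_iff.2 ⟨hu, hA⟩, fun hz => hB ((h.vModular_eq_zero hu).2 hz),
      (h.nehariI_eq_zero hu hA).2 hAB⟩
  · rintro ⟨hW, hz, hI⟩
    obtain ⟨hu, hA⟩ := h.memW0_iff.1 hW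
    exact ⟨hu, hA, fun hB => hz ((h.vModular_eq_zero hu).1 hB), (h.nehariI_eq_zero hu hA).1 hI⟩

/-- The direct method: the a.e. limit of a minimizing sequence, projected onto the Nehari manifold,
is a minimizer. -/
lemma Setting.exists_minimizer (h : Setting Ω s p q pp qm qp) :
    ∃ w ∈ nehariSet Ω s p q, ∀ u ∈ nehariSet Ω s p q,
      reducedE Ω s p q pp w ≤ reducedE Ω s p q pp u := by
  set S := reducedE Ω s p q pp '' nehariSet Ω s p q with hS
  have hSn : S.Nonempty := by
    obtain ⟨u, hu⟩ := h.exists_nehari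
    exact ⟨_, u, hu, rfl⟩
  set m := sInf S with hm
  have hmt : m < ⊤ := by
    obtain ⟨u, hu, hA, hB0, hAB⟩ := h.exists_nehari
    have hmem : reducedE Ω s p q pp u ∈ S := ⟨u, ⟨hu, hA, hB0, hAB⟩, rfl⟩
    refine (sInf_le hmem).trans_lt ((h.reducedE_le u).trans_lt ?_)
    exact ENNReal.add_lt_top.2 ⟨hA, hAB ▸ hA⟩
  obtain ⟨e, -, hem, heS⟩ := exists_seq_tendsto_sInf hSn (OrderBot.bddBelow S)
  obtain ⟨n₀, hn₀⟩ := eventually_atTop.1 (hem.eventually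
    (gt_mem_nhds (show sInf S < m + 1 from ENNReal.lt_add_right hmt.ne one_ne_zero)))
  choose u huN hue using heS
  set κ := ENNReal.ofReal (1 / pp - 1 / qm) with hκ
  have hκ0 : κ ≠ 0 := (ENNReal.ofReal_pos.2 h.coef_pos).ne'
  have hκt : κ ≠ ⊤ := ENNReal.ofReal_ne_top
  set M := (m + 1) / κ with hM
  have hMt : M < ⊤ := ENNReal.div_lt_top (ENNReal.add_lt_top.2 ⟨hmt, ENNReal.one_lt_top⟩).ne hκ0
  have hAM : ∀ n, gagRho Ω s p (u (n + n₀)) ≤ M := by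
    intro n
    rw [(huN _).2.2.2, hM, ENNReal.le_div_iff_mul_le (Or.inl hκ0) (Or.inl hκt), mul_comm]
    refine (h.le_reducedE _).trans ?_
    rw [hue]
    exact (hn₀ _ (Nat.le_add_left _ _)).le
  obtain ⟨w, hw, φ, hφ, hlim⟩ := h.exists_subseq_ae M hMt (fun n => u (n + n₀))
    (fun n => (huN _).1) hAM
  set v : ℕ → Eu N → ℝ := fun n => u (φ n + n₀) with hv
  have hvN : ∀ n, v n ∈ nehariSet Ω s p q := fun n => huN _
  have hvA : ∀ n, Adm Ω (v n) := fun n => (hvN n).1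
  have hvM : ∀ n, gagRho Ω s p (v n) ≤ M := fun n => hAM _
  have hfat := h.gagRho_le_liminf hvA hlim
  have hB := h.limsup_vModular_le hvA hMt hvM hlim
  have hlil : liminf (fun n => vModular Ω q (v n)) atTop ≤
      limsup (fun n => vModular Ω q (v n)) atTop := liminf_le_limsup
  have hAw : gagRho Ω s p w ≤ vModular Ω q w := by
    simp only [fun n => (hvN n).2.2.2] at hfat
    exact hfat.trans (hlil.trans hB)
  have hAt : gagRho Ω s p w < ⊤ :=
    (hfat.trans (liminf_le_of_frequently_le' (Frequently.of_forall hvM))).trans_lt hMt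
  have hB0 : vModular Ω q w ≠ 0 := by
    obtain ⟨c, hc, hlow⟩ := h.nehari_lower
    have h1 : ENNReal.ofReal c ≤ liminf (fun n => vModular Ω q (v n)) atTop := by
      refine le_liminf_of_le (by isBoundedDefault) (Eventually.of_forall fun n => ?_)
      exact hlow (v n) (hvA n) (hvN n).2.2.2 (hvN n).2.2.1
        (h.vModular_lt_top (hvA n) (hvN n).2.1).ne
    exact ((ENNReal.ofReal_pos.2 hc).trans_le (h1.trans (hlil.trans hB))).ne'
  have hJ : reducedE Ω s p q pp w ≤ m := by
    refine (h.reducedE_le_liminf hvA hlim).trans (le_of_eq ?_)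
    refine Tendsto.liminf_eq ?_
    have : Tendsto (fun n => φ n + n₀) atTop atTop :=
      tendsto_atTop_mono (fun n => Nat.le_add_right _ _) hφ.tendsto_atTop
    simpa only [hv, hue, Function.comp_def] using hem.comp this
  obtain ⟨t, ht0, ht1, ht⟩ := h.exists_proj hw hAt hB0 hAw
  refine ⟨fun x => t * w x, ⟨hw.smul t, ?_, h.smul_ne_zero hw hB0 ht0, ht⟩, fun u hu => ?_⟩
  · rw [ht]
    exact (h.vModular_smul_le ht0 ht1 _).trans_lt
      (ENNReal.mul_lt_top ENNReal.ofReal_lt_top (h.vModular_lt_top hw hAt))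
  · exact (h.reducedE_smul_le ht0 ht1 w).trans (hJ.trans (sInf_le ⟨u, hu, rfl⟩))

/-- A minimizer of the reduced energy realizes the depth of the potential well. -/
lemma Setting.depth_attained (h : Setting Ω s p q pp qm qp) :
    ∃ w : Eu N → ℝ, MemW0 Ω s p w ∧ ¬ w =ᵐ[volume] (0 : Eu N → ℝ) ∧ nehariI Ω s p q w = 0 ∧
      energyE Ω s p q w = sInf (energyE Ω s p q '' {u : Eu N → ℝ | MemW0 Ω s p u ∧
        ¬ u =ᵐ[volume] (0 : Eu N → ℝ) ∧ nehariI Ω s p q u = 0}) := by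
  obtain ⟨w, hw, hmin⟩ := h.exists_minimizer
  obtain ⟨h1, h2, h3⟩ := h.mem_nehariSet_iff.1 hw
  refine ⟨w, h1, h2, h3, Eq.symm (IsLeast.csInf_eq ?_)⟩
  refine ⟨⟨w, ⟨h1, h2, h3⟩, rfl⟩, ?_⟩
  rintro _ ⟨u, hu, rfl⟩
  have hu' := h.mem_nehariSet_iff.2 hu
  rw [h.energyE_eq hw.1 hw.2.1 hw.2.2.2, h.energyE_eq hu'.1 hu'.2.1 hu'.2.2.2]
  refine ENNReal.toReal_mono ?_ (hmin u hu')
  exact ((h.reducedE_le u).trans_lt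
    (ENNReal.add_lt_top.2 ⟨hu'.2.1, h.vModular_lt_top hu'.1 hu'.2.1⟩)).ne

/-! ### Verification of the setting -/

/-- The hypotheses of the theorem provide a `Setting`. -/
lemma Setting.of_hypotheses (hΩ : IsOpen Ω) (hbd : Bornology.IsBounded Ω)
    (hs0 : 0 < s) (hs1 : s < 1) (hpc : ContinuousOn p (closure (Qset Ω))) {pm : ℝ}
    (hpm : IsLeast (p '' closure (Qset Ω)) pm) (hpp : IsGreatest (p '' closure (Qset Ω)) pp)
    (h2pm : 2 ≤ pm) (hspN : s * pp < (N : ℝ)) (hqc : ContinuousOn q (closure Ω))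
    (hqm : IsLeast (q '' closure Ω) qm) (hqp : IsGreatest (q '' closure Ω) qp) (hpq : pp < qm)
    (hcrit : ∀ x ∈ closure Ω, qp < (N : ℝ) * p (x, x) / ((N : ℝ) - s * p (x, x)) / 2 + 1) :
    Setting Ω s p q pp qm qp := by
  have hple : ∀ z ∈ closure (Qset Ω), p z ≤ pp := fun z hz => hpp.2 ⟨z, hz, rfl⟩
  have h2p : ∀ z ∈ closure (Qset Ω), 2 ≤ p z := fun z hz => h2pm.trans (hpm.2 ⟨z, hz, rfl⟩)
  have h2pp : 2 ≤ pp := by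
    obtain ⟨z, hz, hzp⟩ := hpp.1
    exact hzp ▸ h2p z hz
  have hN : (0 : ℝ) < N := by nlinarith
  have hQopen : IsOpen (Qset Ω) := (hΩ.isClosed_compl.prod hΩ.isClosed_compl).isOpen_compl
  have hne : (closure Ω).Nonempty := by
    obtain ⟨x, hx, -⟩ := hqm.1
    exact ⟨x, hx⟩
  have hqm_qp : qm ≤ qp := hqm.2 hqp.1
  have hdiag : ∀ x ∈ closure Ω, (x, x) ∈ closure (Qset Ω) := by
    intro x hx
    have : MapsTo (fun y : Eu N => (y, y)) Ω (Qset Ω) := fun y hy => mem_Q_left hy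
    exact map_mem_closure (f := fun y : Eu N => (y, y)) (by fun_prop) hx this
  have hcomp : IsCompact (closure Ω) := hbd.isCompact_closure
  refine ⟨by exact_mod_cast hN, hΩ, hbd, closure_nonempty_iff.1 hne, hs0, hs1, ?_,
    fun z hz => h2p z (subset_closure hz), fun z hz => hple z (subset_closure hz), ?_,
    fun x hx => hqm.2 ⟨x, subset_closure hx, rfl⟩, fun x hx => hqp.2 ⟨x, subset_closure hx, rfl⟩,
    hpq, ?_⟩
  · exact (hpc.mono subset_closure).aemeasurable hQopen.measurableSet
  · exact (hqc.mono subset_closure).aemeasurable hΩ.measurableSet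
  -- `p₀` is the least value of `p` on the diagonal over `closure Ω`
  obtain ⟨x₀, hx₀, hmin⟩ := hcomp.exists_isMinOn hne
    (hpc.comp (g := p) (f := fun x : Eu N => (x, x)) (by fun_prop) hdiag)
  set p₀ := p (x₀, x₀) with hp₀
  have hp₀2 : 2 ≤ p₀ := h2p _ (hdiag x₀ hx₀)
  have hsp₀ : 0 < N - s * p₀ := by
    have := mul_le_mul_of_nonneg_left (hple _ (hdiag x₀ hx₀)) hs0.le
    linarith
  have hqp0 : 0 < qp := by linarith
  have hX : p₀ ≤ N * p₀ / (N - s * p₀) := by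
    rw [le_div_iff₀ hsp₀]
    nlinarith [mul_pos hs0 (by linarith : 0 < p₀)]
  have hcr : qp < N * p₀ / (N - s * p₀) := by
    have := hcrit x₀ hx₀
    rw [← hp₀] at this
    linarith
  -- `N P / (N - s P) > qp` is equivalent to `P > P₁`
  set P₁ := N * qp / (N + s * qp) with hP₁
  have hden : 0 < N + s * qp := by positivity
  have hP₁0 : 0 < P₁ := by positivity
  have hP₁p : P₁ < p₀ := by
    rw [hP₁, div_lt_iff₀ hden]
    rw [lt_div_iff₀ hsp₀] at hcr
    nlinarith
  set P := (P₁ + p₀) / 2 with hP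
  have hPp : P < p₀ := by rw [hP]; linarith
  have hP₁P : P₁ < P := by rw [hP]; linarith
  have hP0 : 0 < P := hP₁0.trans hP₁P
  have hsP : 0 < N - s * P := by nlinarith
  obtain ⟨U, hU, hUeq⟩ := continuousOn_iff'.1 hpc (Ioi P) isOpen_Ioi
  have hK : IsCompact ((fun x : Eu N => (x, x)) '' closure Ω) := hcomp.image (by fun_prop)
  have hKU : (fun x : Eu N => (x, x)) '' closure Ω ⊆ U := by
    rintro _ ⟨x, hx, rfl⟩
    have hmem : (x, x) ∈ p ⁻¹' Ioi P ∩ closure (Qset Ω) :=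
      ⟨hPp.trans_le (hmin hx), hdiag x hx⟩
    rw [hUeq] at hmem
    exact hmem.1
  obtain ⟨δ, hδ, hthick⟩ := hK.exists_thickening_subset_open hU hKU
  refine ⟨δ, hδ, P, hP0, by linarith, ?_, fun x hx y hxy => ?_⟩
  · rw [lt_div_iff₀ hsP]
    rw [hP₁, div_lt_iff₀ hden] at hP₁P
    nlinarith
  · have hxyU : (x, y) ∈ U := by
      refine hthick (Metric.mem_thickening_iff.2 ⟨(x, x), ⟨x, subset_closure hx, rfl⟩, ?_⟩)
      rw [Prod.dist_eq, dist_self, dist_comm y x]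
      exact max_lt hδ hxy
    have hmem : (x, y) ∈ U ∩ closure (Qset Ω) := ⟨hxyU, subset_closure (mem_Q_left hx)⟩
    rw [← hUeq] at hmem
    exact le_of_lt hmem.1

/-- the potential well depth `d = inf_{𝒩} E` is attained. -/
theorem statement_18 {N : ℕ} (Ω : Set (EuclideanSpace ℝ (Fin N))) (hΩ : IsOpen Ω)
    (hbd : Bornology.IsBounded Ω)
    (s : ℝ) (hs0 : 0 < s) (hs1 : s < 1)
    (p : EuclideanSpace ℝ (Fin N) × EuclideanSpace ℝ (Fin N) → ℝ)
    (hpc : ContinuousOn p (closure (Qset Ω)))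
    (hpsym : ∀ z ∈ closure (Qset Ω), p z = p (z.2, z.1))
    (pm pp : ℝ)
    (hpm : IsLeast (p '' closure (Qset Ω)) pm)
    (hpp : IsGreatest (p '' closure (Qset Ω)) pp)
    (h2pm : 2 ≤ pm) (hspN : s * pp < (N : ℝ))
    (q : EuclideanSpace ℝ (Fin N) → ℝ) (hqc : ContinuousOn q (closure Ω))
    (qm qp : ℝ) (hqm : IsLeast (q '' closure Ω) qm)
    (hqp : IsGreatest (q '' closure Ω) qp)
    (hpq : pp < qm)
    (hcrit : ∀ x ∈ closure Ω, qp < (N : ℝ) * p (x, x) / ((N : ℝ) - s * p (x, x)) / 2 + 1) :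
    ∃ w : EuclideanSpace ℝ (Fin N) → ℝ, MemW0 Ω s p w ∧
      ¬ w =ᵐ[volume] (0 : EuclideanSpace ℝ (Fin N) → ℝ) ∧ nehariI Ω s p q w = 0 ∧
      energyE Ω s p q w = sInf (energyE Ω s p q ''
        {u : EuclideanSpace ℝ (Fin N) → ℝ | MemW0 Ω s p u ∧
          ¬ u =ᵐ[volume] (0 : EuclideanSpace ℝ (Fin N) → ℝ) ∧ nehariI Ω s p q u = 0}) := by
  exact (Setting.of_hypotheses hΩ hbd hs0 hs1 hpc hpm hpp h2pm hspN hqc hqm hqp hpq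
    hcrit).depth_attained
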